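/- arXiv:2206.12801 — 3 statements merged into one kernel-verified Lean document; each statement's English description precedes it below -/
import Mathlib

section
/- For every δ>0, every nonempty decreasing subset 𝒮₀ of 𝒮, and every z∈V_S: the functions Λ_{δ,𝒮₀} and Λ^z_{δ,𝒮₀} are lower semicontinuous on 𝒫(V_S), and for every M∈(0,∞) the level sets {μ∈𝒫(V_S) : Λ_{δ,𝒮₀}(μ)≤M} and {μ∈𝒫(V_S) : Λ^z_{δ,𝒮₀}(μ)≤M} are compact. -/
open scoped BigOperators Classical ENNReal
open Filter Topology

noncomputable section
namespace ORRW

/-- Probability measures on a finite type `A`, topologized as a subset of `ℝ^A`. -/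
abbrev ProbMeas (A : Type) [Fintype A] : Type :=
  {p : A → ℝ // (∀ a, 0 ≤ p a) ∧ ∑ a, p a = 1}

/-- Relative entropy `R(γ‖ρ)` between two finitely supported "rows", valued in `EReal`,
with `+∞` when absolute continuity fails. -/
def relEnt {A : Type} [Fintype A] (γ ρ : A → ℝ) : EReal :=
  if ∀ a, ρ a = 0 → γ a = 0 then ((∑ a, γ a * Real.log (γ a / ρ a) : ℝ) : EReal)
  else (⊤ : EReal)

/-- `∫ R(q‖p) dν = Σ_a ν(a) · R(q(a,·)‖p(a,·))`. -/
def relEntInt {A : Type} [Fintype A] (ν : A → ℝ) (q p : A → A → ℝ) : EReal :=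
  ∑ a, (ν a : EReal) * relEnt (q a) (p a)

/-- `ν` is an invariant measure of the kernel `q`. -/
def Invariant {A : Type} [Fintype A] (ν : A → ℝ) (q : A → A → ℝ) : Prop :=
  ∀ y, ∑ x, ν x * q x y = ν y

/-- Extended-real logarithm: `⊥` at nonpositive arguments. -/
def elog (x : ℝ) : EReal := if x ≤ 0 then (⊥ : EReal) else ((Real.log x : ℝ) : EReal)

/-- Empirical measure of a finite trajectory `f : Fin (n+1) → A`. -/
def empMeas {A : Type} [Fintype A] [DecidableEq A] (n : ℕ) (f : Fin (n + 1) → A) :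
    ProbMeas A :=
  ⟨fun a => ((Finset.univ.filter (fun i => f i = a)).card : ℝ) / (n + 1),
    fun a => by positivity, by
      have key : ∑ a : A, ((Finset.univ.filter (fun i => f i = a)).card) = n + 1 := by
        have h := Finset.card_eq_sum_card_fiberwise
          (s := (Finset.univ : Finset (Fin (n + 1)))) (t := (Finset.univ : Finset A))
          (f := f) (fun i _ => Finset.mem_univ (f i))
        simpa using h.symm
      have key' : ∑ a : A, (((Finset.univ.filter (fun i => f i = a)).card : ℝ)) = (n : ℝ) + 1 := by
        have h2 := congrArg (fun m : ℕ => (m : ℝ)) key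
        push_cast at h2
        simpa using h2
      rw [← Finset.sum_div, key', div_self (by positivity)]⟩

section Graph

variable {V : Type} [Fintype V] [DecidableEq V]

/-- Weight of an edge given the set `F` of already traversed edges. -/
def gw (δ : ℝ) (F : Finset (Sym2 V)) (e : Sym2 V) : ℝ := if e ∈ F then δ else 1

/-- The transition kernel `p̂_F` on `V`. -/
def phat (G : SimpleGraph V) [DecidableRel G.Adj] (δ : ℝ) (F : Finset (Sym2 V))
    (x y : V) : ℝ :=
  if G.Adj x y then gw δ F s(x, y) / ∑ z ∈ G.neighborFinset x, gw δ F s(x, z) else 0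

/-- Two edges are adjacent iff they share a vertex. -/
def edgeAdj (e e' : Sym2 V) : Prop := ∃ v, v ∈ e ∧ v ∈ e'

/-- `x` is a vertex of the edge set `F`. -/
def memVerts (F : Finset (Sym2 V)) (x : V) : Prop := ∃ e ∈ F, x ∈ e

/-- `𝒯_G`: stochastic matrices on `V` adapted to `G`. -/
def TG (G : SimpleGraph V) : Set (V → V → ℝ) :=
  {q | (∀ x y, 0 ≤ q x y) ∧ (∀ x, ∑ y, q x y = 1) ∧ ∀ x y, q x y ≠ 0 → G.Adj x y}

/-- `𝒯(F)`: stochastic kernels from the vertex set of `F` to `V`, supported on `F`. -/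
def TE (F : Finset (Sym2 V)) : Set (V → V → ℝ) :=
  {q | (∀ x y, 0 ≤ q x y) ∧ (∀ x, memVerts F x → ∑ y, q x y = 1) ∧
    ∀ x y, q x y ≠ 0 → s(x, y) ∈ F}

/-- `ℰ`: admissible increasing sequences of traversed edge sets. -/
def seqE (G : SimpleGraph V) [DecidableRel G.Adj] (v₁ : V) :
    Set (Fin G.edgeFinset.card → Finset (Sym2 V)) :=
  {Es | (∀ k, Es k ⊆ G.edgeFinset) ∧ (∀ k, (Es k).card = (k : ℕ) + 1) ∧
    (∀ k l : Fin G.edgeFinset.card, (k : ℕ) + 1 = (l : ℕ) → Es k ⊂ Es l) ∧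
    (∀ k : Fin G.edgeFinset.card, (k : ℕ) = 0 → ∃ e ∈ Es k, v₁ ∈ e) ∧
    (∀ k l : Fin G.edgeFinset.card, (k : ℕ) + 1 = (l : ℕ) →
      ∀ e ∈ Es l \ Es k, ∃ e' ∈ Es k, edgeAdj e e')}

/-- The rate function `I_δ`. -/
def Ifun (G : SimpleGraph V) [DecidableRel G.Adj] (v₁ : V) (δ : ℝ) (ν : ProbMeas V) : EReal :=
  sInf { c : EReal |
    ∃ (νs : Fin G.edgeFinset.card → ProbMeas V) (r : Fin G.edgeFinset.card → ℝ)
      (Es : Fin G.edgeFinset.card → Finset (Sym2 V))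
      (qs : Fin G.edgeFinset.card → V → V → ℝ),
      Es ∈ seqE G v₁ ∧ (∀ k, 0 ≤ r k) ∧ (∑ k, r k = 1) ∧
      (∀ k x, (νs k).1 x ≠ 0 → memVerts (Es k) x) ∧
      (∀ x, ∑ k, r k * (νs k).1 x = ν.1 x) ∧
      (∀ k, qs k ∈ TE (Es k)) ∧ (∀ k, Invariant (νs k).1 (qs k)) ∧
      c = ∑ k, ((r k : ℝ) : EReal) * relEntInt (νs k).1 (qs k) (phat G δ (Es k)) }

/-- Edges traversed along a path, given as a list of consecutively visited vertices. -/
def pathEdges : List V → Finset (Sym2 V)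
  | [] => ∅
  | [_] => ∅
  | x :: y :: t => insert s(x, y) (pathEdges (y :: t))

/-- Product of one-step ORRW transition probabilities along a trajectory,
the trajectory being listed in reverse chronological order. -/
def stepsProb (G : SimpleGraph V) [DecidableRel G.Adj] (δ : ℝ) : List V → ℝ
  | [] => 1
  | [_] => 1
  | y :: x :: t => phat G δ (pathEdges (x :: t).reverse) x y * stepsProb G δ (x :: t)

/-- The law of `(X_0, …, X_n)` for the `δ`-ORRW started at `v₁`. -/
def trajProb (G : SimpleGraph V) [DecidableRel G.Adj] (δ : ℝ) (v₁ : V) (n : ℕ)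
    (f : Fin (n + 1) → V) : ℝ :=
  if f 0 = v₁ then stepsProb G δ (List.ofFn f).reverse else 0

/-- `P_{v₁}(L_{n+1} ∈ C)`: the probability that the empirical measure of the first
`n+1` positions of the `δ`-ORRW lies in `C`. -/
def probEmp (G : SimpleGraph V) [DecidableRel G.Adj] (δ : ℝ) (v₁ : V) (n : ℕ)
    (C : Set (ProbMeas V)) : ℝ :=
  ∑ f : Fin (n + 1) → V, if empMeas n f ∈ C then trajProb G δ v₁ n f else 0

/-- The family `𝒮` of edge sets of connected subgraphs having an edge at `v₁`. -/
def scrS (G : SimpleGraph V) [DecidableRel G.Adj] (v₁ : V) : Set (Finset (Sym2 V)) :=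
  {F | F ⊆ G.edgeFinset ∧ (∃ e ∈ F, v₁ ∈ e) ∧
    ∀ x y : V, memVerts F x → memVerts F y →
      (SimpleGraph.fromEdgeSet (↑F : Set (Sym2 V))).Reachable x y}

/-- `𝒮₀` is a decreasing subset of `𝒮`. -/
def DecreasingIn (G : SimpleGraph V) [DecidableRel G.Adj] (v₁ : V)
    (S0 : Set (Finset (Sym2 V))) : Prop :=
  ∀ F₁ F₂, F₁ ∈ scrS G v₁ → F₂ ∈ scrS G v₁ → F₁ ⊆ F₂ → F₂ ∈ S0 → F₁ ∈ S0

/-- `P_{v₁}(T_{𝒮₀} > n)`. -/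
def probTgt (G : SimpleGraph V) [DecidableRel G.Adj] (δ : ℝ) (v₁ : V)
    (S0 : Set (Finset (Sym2 V))) (n : ℕ) : ℝ :=
  ∑ f : Fin (n + 1) → V,
    if ∀ k, 1 ≤ k → k ≤ n → pathEdges ((List.ofFn f).take (k + 1)) ∈ S0 then
      trajProb G δ v₁ n f
    else 0

/-- `P_{v₁}(C_E > n)` for the edge cover time `C_E`. -/
def probCgt (G : SimpleGraph V) [DecidableRel G.Adj] (δ : ℝ) (v₁ : V) (n : ℕ) : ℝ :=
  ∑ f : Fin (n + 1) → V,
    if ¬ G.edgeFinset ⊆ pathEdges (List.ofFn f) then trajProb G δ v₁ n f else 0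

/-- `E_{v₁}[exp (α T_{𝒮₀})]`, valued in `ℝ≥0∞`; the stopping time takes values in
`{1, 2, …} ∪ {∞}`. -/
def expT (G : SimpleGraph V) [DecidableRel G.Adj] (δ : ℝ) (v₁ : V)
    (S0 : Set (Finset (Sym2 V))) (α : ℝ) : ℝ≥0∞ :=
  (∑' n : ℕ, ENNReal.ofReal
      (Real.exp (α * (n + 1)) * (probTgt G δ v₁ S0 n - probTgt G δ v₁ S0 (n + 1)))) +
    (if 0 < α then (⊤ : ℝ≥0∞) else if α = 0 then 1 else 0) *
      ENNReal.ofReal (⨅ n : ℕ, probTgt G δ v₁ S0 n)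

/-- `E_{v₁}[exp (α C_E)]`, valued in `ℝ≥0∞`. -/
def expC (G : SimpleGraph V) [DecidableRel G.Adj] (δ : ℝ) (v₁ : V) (α : ℝ) : ℝ≥0∞ :=
  (∑' n : ℕ, ENNReal.ofReal
      (Real.exp (α * (n + 1)) * (probCgt G δ v₁ n - probCgt G δ v₁ (n + 1)))) +
    (if 0 < α then (⊤ : ℝ≥0∞) else if α = 0 then 1 else 0) *
      ENNReal.ofReal (⨅ n : ℕ, probCgt G δ v₁ n)

/-- The critical exponent `α_c(δ)` attached to a family `𝒮₀` of edge sets. -/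
def alphaC (G : SimpleGraph V) [DecidableRel G.Adj] (δ : ℝ)
    (S0 : Set (Finset (Sym2 V))) : EReal :=
  sInf { c : EReal | ∃ (ν : ProbMeas V) (F : Finset (Sym2 V)) (q : V → V → ℝ),
    F ∈ S0 ∧ q ∈ TE F ∧ (∀ x, ν.1 x ≠ 0 → memVerts F x) ∧ Invariant ν.1 q ∧
    c = relEntInt ν.1 q (phat G δ F) }

/-- `α_c^1(δ)`: the critical exponent for the cover time. -/
def alphaC1 (G : SimpleGraph V) [DecidableRel G.Adj] (v₁ : V) (δ : ℝ) : EReal :=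
  alphaC G δ (scrS G v₁ \ {G.edgeFinset})

end Graph

section Lifted

variable {V : Type} [Fintype V] [LinearOrder V]

/-- Smaller endpoint of an unordered pair. -/
def sym2lo (e : Sym2 V) : V := Sym2.lift ⟨fun a b => min a b, fun a b => min_comm a b⟩ e

/-- Larger endpoint of an unordered pair. -/
def sym2hi (e : Sym2 V) : V := Sym2.lift ⟨fun a b => max a b, fun a b => max_comm a b⟩ e

/-- `V_S = E × {-1, 1}`: vertex set of the lifted directed graph `S`
(`true` plays the role of `+1`). -/
abbrev VSet (G : SimpleGraph V) [DecidableRel G.Adj] : Type :=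
  {e : Sym2 V // e ∈ G.edgeFinset} × Bool

/-- Tail `z⁻` of an oriented edge. -/
def zm (G : SimpleGraph V) [DecidableRel G.Adj] (z : VSet G) : V :=
  if z.2 then sym2lo z.1.1 else sym2hi z.1.1

/-- Head `z⁺` of an oriented edge. -/
def zp (G : SimpleGraph V) [DecidableRel G.Adj] (z : VSet G) : V :=
  if z.2 then sym2hi z.1.1 else sym2lo z.1.1

/-- The kernel `p_F` on the lifted directed graph `S`. -/
def pS (G : SimpleGraph V) [DecidableRel G.Adj] (δ : ℝ) (F : Finset (Sym2 V))
    (z₁ z₂ : VSet G) : ℝ :=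
  if zp G z₁ = zm G z₂ then
    gw δ F z₂.1.1 / ∑ w : VSet G, (if zp G z₁ = zm G w then gw δ F w.1.1 else 0)
  else 0

/-- `𝒯_S`: stochastic matrices on `V_S` moving along orientations. -/
def TS (G : SimpleGraph V) [DecidableRel G.Adj] : Set (VSet G → VSet G → ℝ) :=
  {q | (∀ z w, 0 ≤ q z w) ∧ (∀ z, ∑ w, q z w = 1) ∧ ∀ z w, q z w ≠ 0 → zp G z = zm G w}

/-- `𝒞(𝒮₀)`: probability measures on `V_S` whose first marginal is supported in
some member of `𝒮₀`. -/
def CC (G : SimpleGraph V) [DecidableRel G.Adj] (S0 : Set (Finset (Sym2 V))) :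
    Set (ProbMeas (VSet G)) :=
  {μ | ∃ F ∈ S0, ∀ z : VSet G, μ.1 z ≠ 0 → z.1.1 ∈ F}

/-- `Λ_{δ,𝒮₀}`. -/
def Lam (G : SimpleGraph V) [DecidableRel G.Adj] (v₁ : V) (δ : ℝ)
    (S0 : Set (Finset (Sym2 V))) (μ : ProbMeas (VSet G)) : EReal :=
  sInf { c : EReal |
    ∃ (μs : Fin G.edgeFinset.card → ProbMeas (VSet G)) (r : Fin G.edgeFinset.card → ℝ)
      (Es : Fin G.edgeFinset.card → Finset (Sym2 V))
      (qs : Fin G.edgeFinset.card → VSet G → VSet G → ℝ),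
      Es ∈ seqE G v₁ ∧ (∀ k, 0 ≤ r k) ∧ (∀ k, Es k ∉ S0 → r k = 0) ∧ (∑ k, r k = 1) ∧
      (∀ k z, (μs k).1 z ≠ 0 → z.1.1 ∈ Es k) ∧
      (∀ z, ∑ k, r k * (μs k).1 z = μ.1 z) ∧
      (∀ k, qs k ∈ TS G) ∧ (∀ k, Invariant (μs k).1 (qs k)) ∧
      c = ∑ k, ((r k : ℝ) : EReal) * relEntInt (μs k).1 (qs k) (pS G δ (Es k)) }

/-- `Λ^z_{δ,𝒮₀}`. -/
def LamZ (G : SimpleGraph V) [DecidableRel G.Adj] (v₁ : V) (δ : ℝ)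
    (S0 : Set (Finset (Sym2 V))) (z : VSet G) (μ : ProbMeas (VSet G)) : EReal :=
  sInf { c : EReal |
    ∃ (μs : Fin G.edgeFinset.card → ProbMeas (VSet G)) (r : Fin G.edgeFinset.card → ℝ)
      (Es : Fin G.edgeFinset.card → Finset (Sym2 V))
      (qs : Fin G.edgeFinset.card → VSet G → VSet G → ℝ),
      Es ∈ seqE G v₁ ∧ (∀ k : Fin G.edgeFinset.card, (k : ℕ) = 0 → Es k = {z.1.1}) ∧
      (∀ k, 0 ≤ r k) ∧ (∀ k, Es k ∉ S0 → r k = 0) ∧ (∑ k, r k = 1) ∧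
      (∀ k w, (μs k).1 w ≠ 0 → w.1.1 ∈ Es k) ∧
      (∀ w, ∑ k, r k * (μs k).1 w = μ.1 w) ∧
      (∀ k, qs k ∈ TS G) ∧ (∀ k, Invariant (μs k).1 (qs k)) ∧
      c = ∑ k, ((r k : ℝ) : EReal) * relEntInt (μs k).1 (qs k) (pS G δ (Es k)) }

/-- `Λ₁`: the Donsker–Varadhan functional for the simple random walk on `S`
(whose kernel is `pS` with `δ = 1`). -/
def Lam1 (G : SimpleGraph V) [DecidableRel G.Adj] (μ : ProbMeas (VSet G)) : EReal :=
  sInf { c : EReal | ∃ q ∈ TS G, Invariant μ.1 q ∧ c = relEntInt μ.1 q (pS G 1 ∅) }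

/-- Boundary `∂F` of an edge set: edges of `F` adjacent to some edge outside `F`. -/
def bdry (G : SimpleGraph V) [DecidableRel G.Adj] (F : Finset (Sym2 V)) : Finset (Sym2 V) :=
  F.filter fun e => ∃ e' ∈ G.edgeFinset \ F, edgeAdj e e'

/-- Out-degree `d(z)` of `z` in `S`. -/
def outDeg (G : SimpleGraph V) [DecidableRel G.Adj] (z : VSet G) : ℕ :=
  (Finset.univ.filter (fun w : VSet G => zp G z = zm G w)).card

/-- Number `k(z)` of out-neighbours of `z` lying in `F × {-1, 1}`. -/
def outDegIn (G : SimpleGraph V) [DecidableRel G.Adj] (F : Finset (Sym2 V))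
    (z : VSet G) : ℕ :=
  (Finset.univ.filter (fun w : VSet G => zp G z = zm G w ∧ w.1.1 ∈ F)).card

/-- The law of `(Z_0, …, Z_n)` for the lifted `δ`-ORRW conditioned on `Z_0 = z`. -/
def liftTraj (G : SimpleGraph V) [DecidableRel G.Adj] (δ : ℝ) (z : VSet G) (n : ℕ)
    (g : Fin (n + 1) → VSet G) : ℝ :=
  if g 0 = z then
    ∏ i : Fin n,
      pS G δ ((Finset.Iic i.castSucc).image (fun j => (g j).1.1))
        (g i.castSucc) (g i.succ)
  else 0

/-- The restricted logarithmic Laplace functional `W^{n+1}_{𝒮₀}(z)`. -/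
def Wres (G : SimpleGraph V) [DecidableRel G.Adj] (δ : ℝ) (z : VSet G)
    (S0 : Set (Finset (Sym2 V))) (h : ProbMeas (VSet G) → ℝ) (n : ℕ) : EReal :=
  if 0 < ∑ g : Fin (n + 1) → VSet G,
      (if empMeas n g ∈ CC G S0 then liftTraj G δ z n g else 0) then
    ((-((((n : ℝ) + 1))⁻¹ * Real.log (∑ g : Fin (n + 1) → VSet G,
      if empMeas n g ∈ CC G S0 then
        Real.exp (-((n : ℝ) + 1) * h (empMeas n g)) * liftTraj G δ z n g
      else 0)) : ℝ) : EReal)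
  else (⊤ : EReal)

end Lifted

section Proof

theorem inf_lsc_compact {ι P Y : Type} [Finite ι] [TopologicalSpace P] [T2Space P]
    [TopologicalSpace Y] (K : ι → Set (P × Y)) (hK : ∀ i, IsCompact (K i))
    (F : ι → P × Y → ℝ) (hF : ∀ i, Continuous (F i)) (L : P → EReal)
    (hL : ∀ μ, L μ = sInf {c : EReal | ∃ i y, (μ, y) ∈ K i ∧ c = (F i (μ, y) : EReal)}) :
    LowerSemicontinuous L ∧ ∀ M : ℝ, IsCompact {μ | L μ ≤ (M : EReal)} := by
  have hatt : ∀ μ, L μ = ⊤ ∨ ∃ i y, (μ, y) ∈ K i ∧ L μ = (F i (μ, y) : EReal) := by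
    intro μ
    by_cases hne : ∃ i y, (μ, y) ∈ K i
    · right
      obtain ⟨i₀, y₀, h₀⟩ := hne
      have hc : IsCompact (⋃ i, F i '' (K i ∩ Prod.fst ⁻¹' {μ})) := by
        refine isCompact_iUnion fun i => ?_
        refine IsCompact.image ?_ (hF i)
        exact (hK i).inter_right (isClosed_singleton.preimage continuous_fst)
      have hn : (⋃ i, F i '' (K i ∩ Prod.fst ⁻¹' {μ})).Nonempty :=
        ⟨F i₀ (μ, y₀), Set.mem_iUnion.2 ⟨i₀, (μ, y₀), ⟨h₀, rfl⟩, rfl⟩⟩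
      obtain ⟨m, hm, hmin⟩ := hc.exists_isLeast hn
      obtain ⟨i, hi⟩ := Set.mem_iUnion.1 hm
      obtain ⟨⟨μ', y⟩, ⟨hxK, hxμ⟩, hxm⟩ := hi
      have hxμ' : μ' = μ := hxμ
      subst hxμ'
      refine ⟨i, y, hxK, ?_⟩
      rw [hL]
      apply le_antisymm
      · exact sInf_le ⟨i, y, hxK, rfl⟩
      · refine le_sInf ?_
        rintro c ⟨j, y', hy', rfl⟩
        rw [hxm]
        exact EReal.coe_le_coe_iff.2
          (hmin (Set.mem_iUnion.2 ⟨j, (μ', y'), ⟨hy', rfl⟩, rfl⟩))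
    · left
      rw [hL]
      have : {c : EReal | ∃ i y, (μ, y) ∈ K i ∧ c = (F i (μ, y) : EReal)} = ∅ := by
        ext c
        simp only [Set.mem_ofPred_eq, Set.mem_empty_iff_false, iff_false]
        rintro ⟨i, y, h, _⟩
        exact hne ⟨i, y, h⟩
      rw [this, sInf_empty]
  have hcomp : ∀ M : ℝ, IsCompact {μ | L μ ≤ (M : EReal)} := by
    intro M
    have he : {μ | L μ ≤ (M : EReal)} = ⋃ i, Prod.fst '' (K i ∩ F i ⁻¹' Set.Iic M) := by
      ext μ
      simp only [Set.mem_ofPred_eq, Set.mem_iUnion]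
      constructor
      · intro h
        rcases hatt μ with h1 | ⟨i, y, hy, h1⟩
        · rw [h1] at h
          exact absurd h (by simp)
        · rw [h1] at h
          exact ⟨i, (μ, y), ⟨hy, EReal.coe_le_coe_iff.1 h⟩, rfl⟩
      · rintro ⟨i, ⟨μ', y⟩, ⟨hy, hM⟩, rfl⟩
        rw [hL]
        have hle : sInf {c : EReal | ∃ i y, (μ', y) ∈ K i ∧ c = (F i (μ', y) : EReal)} ≤
            (F i (μ', y) : EReal) := sInf_le ⟨i, y, hy, rfl⟩
        exact hle.trans (EReal.coe_le_coe_iff.2 hM)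
    rw [he]
    refine isCompact_iUnion fun i => ?_
    exact ((hK i).inter_right (isClosed_Iic.preimage (hF i))).image continuous_fst
  refine ⟨?_, hcomp⟩
  rw [lowerSemicontinuous_iff_isClosed_preimage]
  intro y
  induction y with
  | bot =>
    have : L ⁻¹' Set.Iic ⊥ = ∅ := by
      ext μ
      simp only [Set.mem_preimage, Set.mem_Iic, le_bot_iff, Set.mem_empty_iff_false, iff_false]
      rcases hatt μ with h1 | ⟨i, y, hy, h1⟩ <;> rw [h1] <;> simp
    rw [this]
    exact isClosed_empty
  | top => simp
  | coe M => exact (hcomp M).isClosed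

theorem continuous_mul_log_div (p : ℝ) : Continuous fun x : ℝ => x * Real.log (x / p) := by
  by_cases hp : p = 0
  · subst hp
    simpa using continuous_const
  · have h : (fun x : ℝ => x * Real.log (x / p)) =
        fun x => x * Real.log x - x * Real.log p := by
      funext x
      by_cases hx : x = 0
      · simp [hx]
      · rw [Real.log_div hx hp]
        ring
    rw [h]
    exact Real.continuous_mul_log.sub (continuous_id.mul continuous_const)

instance compactProbMeas (A : Type) [Fintype A] : CompactSpace (ProbMeas A) := by
  exact isCompact_iff_compactSpace.1 (isCompact_stdSimplex ℝ A)

variable {V : Type} [Fintype V] [LinearOrder V]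

theorem pS_ne_zero (G : SimpleGraph V) [DecidableRel G.Adj] (δ : ℝ) (hδ : 0 < δ)
    (F : Finset (Sym2 V)) (z w : VSet G) (h : zp G z = zm G w) : pS G δ F z w ≠ 0 := by
  have hg : ∀ e : Sym2 V, 0 < gw δ F e := by
    intro e
    unfold gw
    split_ifs <;> simp [hδ]
  have hs : 0 < ∑ w : VSet G, (if zp G z = zm G w then gw δ F w.1.1 else 0) := by
    refine Finset.sum_pos' (fun i _ => ?_) ⟨w, Finset.mem_univ _, ?_⟩
    · split_ifs
      · exact (hg _).le
      · exact le_rfl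
    · rw [if_pos h]
      exact hg _
  unfold pS
  rw [if_pos h]
  exact (div_pos (hg _) hs).ne'

theorem ereal_coe_sum {ι : Type} (s : Finset ι) (f : ι → ℝ) :
    ((∑ i ∈ s, f i : ℝ) : EReal) = ∑ i ∈ s, (f i : EReal) := by
  induction s using Finset.induction_on with
  | empty => simp
  | insert a s ha ih => rw [Finset.sum_insert ha, Finset.sum_insert ha, EReal.coe_add, ih]

theorem relEntInt_coe (G : SimpleGraph V) [DecidableRel G.Adj] (δ : ℝ) (hδ : 0 < δ)
    (F : Finset (Sym2 V)) (ν : VSet G → ℝ) (q : VSet G → VSet G → ℝ) (hq : q ∈ TS G) :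
    relEntInt ν q (pS G δ F) =
      ((∑ a, ν a * ∑ w, q a w * Real.log (q a w / pS G δ F a w) : ℝ) : EReal) := by
  unfold relEntInt
  rw [ereal_coe_sum]
  refine Finset.sum_congr rfl fun a _ => ?_
  have : relEnt (q a) (pS G δ F a) =
      ((∑ w, q a w * Real.log (q a w / pS G δ F a w) : ℝ) : EReal) := by
    unfold relEnt
    rw [if_pos]
    intro w hw
    by_contra hne
    exact pS_ne_zero G δ hδ F a w (hq.2.2 a w hne) hw
  rw [this, EReal.coe_mul]

/-- Parameter space. -/
abbrev YY (G : SimpleGraph V) [DecidableRel G.Adj] : Type :=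
  (Fin G.edgeFinset.card → ProbMeas (VSet G)) × (Fin G.edgeFinset.card → ℝ) ×
    (Fin G.edgeFinset.card → VSet G → VSet G → ℝ)

/-- Feasible set. -/
def KK (G : SimpleGraph V) [DecidableRel G.Adj] (S0 : Set (Finset (Sym2 V)))
    (Es : Fin G.edgeFinset.card → Finset (Sym2 V)) : Set (ProbMeas (VSet G) × YY G) :=
  {x | (∀ k, 0 ≤ x.2.2.1 k) ∧ (∀ k, Es k ∉ S0 → x.2.2.1 k = 0) ∧ (∑ k, x.2.2.1 k = 1) ∧
      (∀ k z, z.1.1 ∉ Es k → (x.2.1 k).1 z = 0) ∧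
      (∀ z, ∑ k, x.2.2.1 k * (x.2.1 k).1 z = x.1.1 z) ∧
      (∀ k z w, 0 ≤ x.2.2.2 k z w) ∧ (∀ k z, ∑ w, x.2.2.2 k z w = 1) ∧
      (∀ k z w, zp G z ≠ zm G w → x.2.2.2 k z w = 0) ∧
      (∀ k y, ∑ z, (x.2.1 k).1 z * x.2.2.2 k z y = (x.2.1 k).1 y)}

/-- Real cost. -/
def FF (G : SimpleGraph V) [DecidableRel G.Adj] (δ : ℝ)
    (Es : Fin G.edgeFinset.card → Finset (Sym2 V)) (x : ProbMeas (VSet G) × YY G) : ℝ :=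
  ∑ k, x.2.2.1 k * ∑ a, (x.2.1 k).1 a *
    ∑ w, x.2.2.2 k a w * Real.log (x.2.2.2 k a w / pS G δ (Es k) a w)

theorem cont_fst (G : SimpleGraph V) [DecidableRel G.Adj] (a : VSet G) :
    Continuous fun x : ProbMeas (VSet G) × YY G => x.1.1 a :=
  (continuous_apply a).comp (continuous_subtype_val.comp continuous_fst)

theorem cont_mu (G : SimpleGraph V) [DecidableRel G.Adj] (k : Fin G.edgeFinset.card)
    (a : VSet G) : Continuous fun x : ProbMeas (VSet G) × YY G => (x.2.1 k).1 a :=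
  (continuous_apply a).comp (continuous_subtype_val.comp ((continuous_apply k).comp
    (continuous_fst.comp continuous_snd)))

theorem continuous_FF (G : SimpleGraph V) [DecidableRel G.Adj] (δ : ℝ)
    (Es : Fin G.edgeFinset.card → Finset (Sym2 V)) : Continuous (FF G δ Es) := by
  unfold FF
  refine continuous_finsetSum _ fun k _ => Continuous.mul (by fun_prop) ?_
  refine continuous_finsetSum _ fun a _ => Continuous.mul (cont_mu G k a) ?_
  refine continuous_finsetSum _ fun w _ => ?_
  exact (continuous_mul_log_div _).comp (by fun_prop)

theorem isCompact_KK (G : SimpleGraph V) [DecidableRel G.Adj] (S0 : Set (Finset (Sym2 V)))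
    (Es : Fin G.edgeFinset.card → Finset (Sym2 V)) : IsCompact (KK G S0 Es) := by
  have hB : IsCompact ((Set.univ : Set (ProbMeas (VSet G))) ×ˢ
      ((Set.univ : Set (Fin G.edgeFinset.card → ProbMeas (VSet G))) ×ˢ
        ((Set.univ.pi fun _ : Fin G.edgeFinset.card => Set.Icc (0:ℝ) 1) ×ˢ
          (Set.univ.pi fun _ : Fin G.edgeFinset.card => Set.univ.pi fun _ : VSet G =>
            Set.univ.pi fun _ : VSet G => Set.Icc (0:ℝ) 1)))) := by
    refine isCompact_univ.prod (isCompact_univ.prod (IsCompact.prod ?_ ?_))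
    · exact isCompact_univ_pi fun _ => isCompact_Icc
    · exact isCompact_univ_pi fun _ => isCompact_univ_pi fun _ => isCompact_univ_pi fun _ =>
        isCompact_Icc
  refine hB.of_isClosed_subset ?_ ?_
  · unfold KK
    simp only [Set.ofPred_and, Set.ofPred_forall]
    refine IsClosed.inter ?_ <| IsClosed.inter ?_ <| IsClosed.inter ?_ <| IsClosed.inter ?_ <|
      IsClosed.inter ?_ <| IsClosed.inter ?_ <| IsClosed.inter ?_ <| IsClosed.inter ?_ ?_
    · exact isClosed_iInter fun k => isClosed_le (by fun_prop) (by fun_prop)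
    · exact isClosed_iInter fun k => isClosed_iInter fun _ =>
        isClosed_eq (by fun_prop) (by fun_prop)
    · exact isClosed_eq (by fun_prop) (by fun_prop)
    · exact isClosed_iInter fun k => isClosed_iInter fun z => isClosed_iInter fun _ =>
        isClosed_eq (cont_mu G k z) (by fun_prop)
    · exact isClosed_iInter fun z => isClosed_eq
        (continuous_finsetSum _ fun k _ => Continuous.mul (by fun_prop) (cont_mu G k z))
        (cont_fst G z)
    · exact isClosed_iInter fun k => isClosed_iInter fun z => isClosed_iInter fun w =>
        isClosed_le (by fun_prop) (by fun_prop)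
    · exact isClosed_iInter fun k => isClosed_iInter fun z =>
        isClosed_eq (by fun_prop) (by fun_prop)
    · exact isClosed_iInter fun k => isClosed_iInter fun z => isClosed_iInter fun w =>
        isClosed_iInter fun _ => isClosed_eq (by fun_prop) (by fun_prop)
    · exact isClosed_iInter fun k => isClosed_iInter fun z =>
        isClosed_eq (continuous_finsetSum _ fun w _ => Continuous.mul (cont_mu G k w)
          (by fun_prop)) (cont_mu G k z)
  · rintro ⟨μ, μs, r, qs⟩ ⟨h1, -, h3, -, -, h6, h7, -, -⟩
    refine ⟨trivial, trivial, ?_, ?_⟩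
    · intro k _
      refine ⟨h1 k, ?_⟩
      rw [← h3]
      exact Finset.single_le_sum (f := r) (fun i _ => h1 i) (Finset.mem_univ k)
    · intro k _ z _ w _
      refine ⟨h6 k z w, ?_⟩
      rw [← h7 k z]
      exact Finset.single_le_sum (f := fun w => qs k z w) (fun i _ => h6 k z i)
        (Finset.mem_univ w)

theorem gen_lsc_compact (G : SimpleGraph V) [DecidableRel G.Adj] (δ : ℝ) (hδ : 0 < δ)
    (S0 : Set (Finset (Sym2 V))) (J : Set (Fin G.edgeFinset.card → Finset (Sym2 V)))
    (L : ProbMeas (VSet G) → EReal)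
    (hL : ∀ μ, L μ = sInf { c : EReal |
      ∃ (μs : Fin G.edgeFinset.card → ProbMeas (VSet G)) (r : Fin G.edgeFinset.card → ℝ)
        (Es : Fin G.edgeFinset.card → Finset (Sym2 V))
        (qs : Fin G.edgeFinset.card → VSet G → VSet G → ℝ),
        Es ∈ J ∧ (∀ k, 0 ≤ r k) ∧ (∀ k, Es k ∉ S0 → r k = 0) ∧ (∑ k, r k = 1) ∧
        (∀ k z, (μs k).1 z ≠ 0 → z.1.1 ∈ Es k) ∧
        (∀ z, ∑ k, r k * (μs k).1 z = μ.1 z) ∧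
        (∀ k, qs k ∈ TS G) ∧ (∀ k, Invariant (μs k).1 (qs k)) ∧
        c = ∑ k, ((r k : ℝ) : EReal) * relEntInt (μs k).1 (qs k) (pS G δ (Es k)) }) :
    LowerSemicontinuous L ∧ ∀ M : ℝ, IsCompact {μ | L μ ≤ (M : EReal)} := by
  have hcost : ∀ (μ : ProbMeas (VSet G)) (μs : Fin G.edgeFinset.card → ProbMeas (VSet G))
      (r : Fin G.edgeFinset.card → ℝ)
      (Es : Fin G.edgeFinset.card → Finset (Sym2 V))
      (qs : Fin G.edgeFinset.card → VSet G → VSet G → ℝ), (∀ k, qs k ∈ TS G) →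
      ∑ k, ((r k : ℝ) : EReal) * relEntInt (μs k).1 (qs k) (pS G δ (Es k)) =
        (FF G δ Es (μ, μs, r, qs) : EReal) := by
    intro μ μs r Es qs hq
    unfold FF
    rw [ereal_coe_sum]
    refine Finset.sum_congr rfl fun k _ => ?_
    rw [relEntInt_coe G δ hδ (Es k) _ _ (hq k), EReal.coe_mul]
  refine inf_lsc_compact (ι := J) (fun i => KK G S0 i.1) (fun i => isCompact_KK G S0 i.1)
    (fun i => FF G δ i.1) (fun i => continuous_FF G δ i.1) L fun μ => ?_
  rw [hL]
  congr 1
  ext c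
  constructor
  · rintro ⟨μs, r, Es, qs, hE, h1, h2, h3, h4, h5, h6, h7, rfl⟩
    refine ⟨⟨Es, hE⟩, (μs, r, qs), ⟨h1, h2, h3, fun k z => not_imp_comm.1 (h4 k z), h5,
      fun k => (h6 k).1, fun k => (h6 k).2.1,
      fun k z w => not_imp_comm.1 ((h6 k).2.2 z w), h7⟩, hcost _ _ _ _ _ h6⟩
  · rintro ⟨⟨Es, hE⟩, ⟨μs, r, qs⟩, ⟨h1, h2, h3, h4, h5, h6, h7, h8, h9⟩, rfl⟩
    have hq : ∀ k, qs k ∈ TS G := fun k =>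
      ⟨h6 k, h7 k, fun z w => not_imp_comm.1 (h8 k z w)⟩
    exact ⟨μs, r, Es, qs, hE, h1, h2, h3, fun k z => not_imp_comm.1 (h4 k z), h5, hq, h9,
      (hcost _ _ _ _ _ hq).symm⟩

end Proof

/-- `Λ_{δ,𝒮₀}` and `Λ^z_{δ,𝒮₀}` are lower semicontinuous with
compact sublevel sets. -/
theorem orrw_Lam_lsc_compact {V : Type} [Fintype V] [LinearOrder V]
    (G : SimpleGraph V) [DecidableRel G.Adj] (hG : G.Connected)
    (hV : 3 ≤ Fintype.card V) (v₁ : V) (δ : ℝ) (hδ : 0 < δ)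
    (S0 : Set (Finset (Sym2 V))) (hS0ne : S0.Nonempty) (hS0sub : S0 ⊆ scrS G v₁)
    (hS0dec : DecreasingIn G v₁ S0) :
    LowerSemicontinuous (Lam G v₁ δ S0) ∧
    (∀ z : VSet G, LowerSemicontinuous (LamZ G v₁ δ S0 z)) ∧
    (∀ M : ℝ, 0 < M →
      IsCompact {μ : ProbMeas (VSet G) | Lam G v₁ δ S0 μ ≤ ((M : ℝ) : EReal)}) ∧
    (∀ z : VSet G, ∀ M : ℝ, 0 < M →
      IsCompact {μ : ProbMeas (VSet G) | LamZ G v₁ δ S0 z μ ≤ ((M : ℝ) : EReal)}) := by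
  have h1 := gen_lsc_compact G δ hδ S0 (seqE G v₁) (Lam G v₁ δ S0) (fun μ => rfl)
  have h2 := fun z : VSet G => gen_lsc_compact G δ hδ S0
    {Es | Es ∈ seqE G v₁ ∧ ∀ k : Fin G.edgeFinset.card, (k : ℕ) = 0 → Es k = {z.1.1}}
    (LamZ G v₁ δ S0 z) (fun μ => by
      unfold LamZ
      simp only [Set.mem_ofPred_eq, and_assoc])
  exact ⟨h1.1, fun z => (h2 z).1, fun M _ => h1.2 M, fun z M _ => (h2 z).2 M⟩


end ORRW
end
end

section
/- Let 𝒮₀ be a nonempty decreasing subset of 𝒮 with 𝒮₀≠𝒮. Then inf_{μ∈𝒞(𝒮₀)} Λ_{δ,𝒮₀}(μ) ∈ (0,∞), and lim_{n→∞} (1/n)·log P_{v₁}(T_{𝒮₀}>n) = −inf_{μ∈𝒞(𝒮₀)} Λ_{δ,𝒮₀}(μ). -/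
open scoped BigOperators Classical ENNReal
open Filter Topology

noncomputable section
namespace ORRW

theorem pf_exists {A : Type} [Fintype A] (W : A → A → ℝ) (d : A → ℝ) (hd : ∀ x, 0 < d x)
    (hsym : ∀ x y, W x y = W y x) (hW : ∀ x y, 0 ≤ W x y) (hpos : ∃ x y, 0 < W x y) :
    ∃ (φ : A → ℝ) (ρ : ℝ), (∀ x, 0 ≤ φ x) ∧ 0 < ρ ∧ (∃ x, 0 < φ x) ∧
      ∀ x, ∑ y, W x y * φ y = ρ * d x * φ x := by
  classical
  obtain ⟨x0, y0, h0⟩ := hpos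
  set K : Set (A → ℝ) := {φ | ∑ x, d x * φ x ^ 2 = 1} with hK
  set B : (A → ℝ) → ℝ := fun φ => ∑ x, ∑ y, W x y * φ x * φ y with hB
  have hBc : Continuous B := by
    simp only [hB]; fun_prop
  have hKc : IsCompact K := by
    apply Metric.isCompact_of_isClosed_isBounded
    · apply isClosed_eq <;> fun_prop
    · obtain ⟨m, hm⟩ : ∃ m : ℝ, 0 < m ∧ ∀ x, m ≤ d x := by
        have : (Finset.univ.image d).Nonempty := ⟨d x0, by simp⟩
        refine ⟨(Finset.univ.image d).min' this, ?_, ?_⟩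
        · obtain ⟨x, -, hx⟩ := Finset.mem_image.1 ((Finset.univ.image d).min'_mem this)
          rw [← hx]; exact hd x
        · intro x; exact Finset.min'_le _ _ (by simp)
      refine (Metric.isBounded_iff_subset_closedBall (0 : A → ℝ)).2 ⟨1 + 1 / m, ?_⟩
      intro φ hφ
      have hφ1 : ∑ x, d x * φ x ^ 2 = 1 := hφ
      have h1m : 0 < 1 / m := by have := hm.1; positivity
      rw [mem_closedBall_zero_iff, pi_norm_le_iff_of_nonneg (by positivity)]
      intro x
      have h1 : d x * φ x ^ 2 ≤ 1 := by
        rw [← hφ1]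
        exact Finset.single_le_sum (f := fun x => d x * φ x ^ 2)
          (fun i _ => mul_nonneg (hd i).le (sq_nonneg _)) (Finset.mem_univ x)
      have h2 : m * φ x ^ 2 ≤ 1 :=
        le_trans (mul_le_mul_of_nonneg_right (hm.2 x) (sq_nonneg _)) h1
      have h3 : φ x ^ 2 ≤ 1 / m := by
        rw [le_div_iff₀ hm.1]; linarith
      rw [Real.norm_eq_abs]
      apply abs_le_of_sq_le_sq _ (by positivity)
      nlinarith
  have hscale : ∀ φ : A → ℝ, 0 < ∑ x, d x * φ x ^ 2 →
      (fun x => (Real.sqrt (∑ x, d x * φ x ^ 2))⁻¹ * φ x) ∈ K := by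
    intro φ hφ
    have hs : (Real.sqrt (∑ x, d x * φ x ^ 2)) ^ 2 = ∑ x, d x * φ x ^ 2 := Real.sq_sqrt hφ.le
    change ∑ x, d x * ((Real.sqrt (∑ x, d x * φ x ^ 2))⁻¹ * φ x) ^ 2 = 1
    have : ∀ x, d x * ((Real.sqrt (∑ x, d x * φ x ^ 2))⁻¹ * φ x) ^ 2
        = (∑ x, d x * φ x ^ 2)⁻¹ * (d x * φ x ^ 2) := by
      intro x; rw [mul_pow, inv_pow, hs]; ring
    simp_rw [this]
    rw [← Finset.mul_sum, inv_mul_cancel₀ hφ.ne']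
  have hN : ∀ φ : A → ℝ, (∃ x, φ x ≠ 0) → 0 < ∑ x, d x * φ x ^ 2 := by
    rintro φ ⟨x, hx⟩
    apply Finset.sum_pos' (fun i _ => mul_nonneg (hd i).le (sq_nonneg _))
    exact ⟨x, Finset.mem_univ _, mul_pos (hd x) (by positivity)⟩
  have hne : K.Nonempty := ⟨_, hscale (fun _ => 1) (hN _ ⟨x0, one_ne_zero⟩)⟩
  obtain ⟨φ0, hφ0, hmax⟩ := hKc.exists_isMaxOn hne hBc.continuousOn
  set ρ := B φ0 with hρ
  have hle : ∀ φ : A → ℝ, B φ ≤ ρ * ∑ x, d x * φ x ^ 2 := by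
    intro φ
    by_cases hz : ∃ x, φ x ≠ 0
    · have hp := hN φ hz
      have h1 : B _ ≤ B φ0 := hmax (hscale φ hp)
      have h2 : B (fun x => (Real.sqrt (∑ x, d x * φ x ^ 2))⁻¹ * φ x)
          = (∑ x, d x * φ x ^ 2)⁻¹ * B φ := by
        have hs : (Real.sqrt (∑ x, d x * φ x ^ 2)) ^ 2 = ∑ x, d x * φ x ^ 2 := Real.sq_sqrt hp.le
        simp only [hB]
        rw [Finset.mul_sum]
        refine Finset.sum_congr rfl fun x _ => ?_
        rw [Finset.mul_sum]
        refine Finset.sum_congr rfl fun y _ => ?_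
        have : (∑ x, d x * φ x ^ 2)⁻¹ = (Real.sqrt (∑ x, d x * φ x ^ 2))⁻¹ ^ 2 := by
          rw [inv_pow, hs]
        rw [this]; ring
      rw [h2, inv_mul_le_iff₀ hp] at h1
      rw [mul_comm]; exact h1
    · push Not at hz
      simp [hB, hz]
  set φ : A → ℝ := fun x => |φ0 x| with hφ
  have hφN : ∑ x, d x * φ x ^ 2 = 1 := by
    simp only [hφ, sq_abs]; exact hφ0
  have hφB : B φ = ρ := by
    apply le_antisymm
    · simpa [hφN] using hle φ
    · simp only [hρ, hB]
      refine Finset.sum_le_sum fun x _ => Finset.sum_le_sum fun y _ => ?_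
      rw [mul_assoc, mul_assoc]
      refine mul_le_mul_of_nonneg_left ?_ (hW x y)
      rw [← abs_mul]; exact le_abs_self _
  have hρpos : 0 < ρ := by
    have h1 := hle (fun _ => 1)
    have h2 : 0 < B (fun _ => 1) := by
      simp only [hB, mul_one]
      refine Finset.sum_pos' (fun i _ => Finset.sum_nonneg fun j _ => hW i j) ⟨x0, Finset.mem_univ _, ?_⟩
      exact Finset.sum_pos' (fun j _ => hW x0 j) ⟨y0, Finset.mem_univ _, h0⟩
    by_contra hcon
    have := mul_nonpos_of_nonpos_of_nonneg (not_lt.1 hcon) (hN (fun _ => 1) ⟨x0, one_ne_zero⟩).le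
    linarith
  refine ⟨φ, ρ, fun x => abs_nonneg _, hρpos, ?_, ?_⟩
  · by_contra hcon
    push Not at hcon
    have : ∀ x, φ x = 0 := fun x => le_antisymm (hcon x) (abs_nonneg _)
    simp [this] at hφN
  · intro x
    -- perturbation
    set b := ∑ y, W x y * φ y - ρ * d x * φ x with hb
    have hpert : ∀ t : ℝ, 2 * t * b + t ^ 2 * (W x x - ρ * d x) ≤ 0 := by
      intro t
      have h1 := hle (fun y => φ y + t * (if y = x then 1 else 0))
      have hB1 : B (fun y => φ y + t * (if y = x then 1 else 0))
          = ρ + 2 * t * (∑ y, W x y * φ y) + t ^ 2 * W x x := by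
        rw [← hφB]
        simp only [hB]
        have : ∀ u y, W u y * (φ u + t * (if u = x then 1 else 0)) * (φ y + t * (if y = x then 1 else 0))
            = W u y * φ u * φ y + (if u = x then t * (W u y * φ y) else 0)
              + (if y = x then t * (W u y * φ u) else 0)
              + (if u = x then if y = x then t ^ 2 * W u y else 0 else 0) := by
          intro u y; split_ifs <;> ring
        simp_rw [this, Finset.sum_add_distrib]
        have e1 : ∑ u, ∑ y, (if u = x then t * (W u y * φ y) else 0) = t * ∑ y, W x y * φ y := by
          rw [Finset.sum_comm, Finset.mul_sum]
          simp
        have e2 : ∑ u, ∑ y, (if y = x then t * (W u y * φ u) else 0) = t * ∑ y, W x y * φ y := by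
          rw [Finset.mul_sum]
          simp [hsym x]
        have e3 : ∑ u, ∑ y, (if u = x then if y = x then t ^ 2 * W u y else 0 else 0) = t ^ 2 * W x x := by
          rw [Finset.sum_comm]
          simp
        rw [e1, e2, e3]; ring
      have hN1 : ∑ y, d y * (φ y + t * (if y = x then 1 else 0)) ^ 2
          = 1 + 2 * t * (d x * φ x) + t ^ 2 * d x := by
        have : ∀ y, d y * (φ y + t * (if y = x then 1 else 0)) ^ 2
            = d y * φ y ^ 2 + (if y = x then 2 * t * (d y * φ y) + t ^ 2 * d y else 0) := by
          intro y; split_ifs <;> ring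
        simp_rw [this, Finset.sum_add_distrib]
        rw [hφN]
        simp; ring
      rw [hB1, hN1] at h1
      rw [hb]; nlinarith
    have hb0 : b = 0 := by
      by_contra hbn
      set c := |W x x - ρ * d x| + 1 with hc
      have hcp : 0 < c := by positivity
      have h := hpert (b / c)
      have h2 : -c ≤ W x x - ρ * d x := by
        have := neg_abs_le (W x x - ρ * d x); linarith
      have h3 : (b / c) ^ 2 * (-c) ≤ (b / c) ^ 2 * (W x x - ρ * d x) :=
        mul_le_mul_of_nonneg_left h2 (sq_nonneg _)
      have h4 : 2 * (b / c) * b + (b / c) ^ 2 * (-c) = b ^ 2 / c := by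
        field_simp; ring
      have h5 : 0 < b ^ 2 / c := by positivity
      linarith
    linarith

section Sub2

variable {V : Type} [Fintype V] [LinearOrder V]

def dw (G : SimpleGraph V) [DecidableRel G.Adj] (δ : ℝ) (F : Finset (Sym2 V)) (x : V) : ℝ :=
  ∑ z ∈ G.neighborFinset x, gw δ F s(x, z)

def Wt (δ : ℝ) (F : Finset (Sym2 V)) (x y : V) : ℝ := if s(x, y) ∈ F then δ else 0

structure IsPF (G : SimpleGraph V) [DecidableRel G.Adj] (δ : ℝ) (F : Finset (Sym2 V))
    (φ : V → ℝ) (ρ : ℝ) : Prop where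
  nonneg : ∀ x, 0 ≤ φ x
  rpos : 0 < ρ
  nz : ∃ x, 0 < φ x
  eig : ∀ x, ∑ y, Wt δ F x y * φ y = ρ * dw G δ F x * φ x

theorem gw_pos {δ : ℝ} (hδ : 0 < δ) (F : Finset (Sym2 V)) (e : Sym2 V) : 0 < gw δ F e := by
  unfold gw; split_ifs <;> [exact hδ; exact one_pos]

theorem dw_pos (G : SimpleGraph V) [DecidableRel G.Adj] (hG : G.Connected)
    (hV : 3 ≤ Fintype.card V) {δ : ℝ} (hδ : 0 < δ) (F : Finset (Sym2 V)) (x : V) :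
    0 < dw G δ F x := by
  have : Nontrivial V := Fintype.one_lt_card_iff_nontrivial.1 (by omega)
  obtain ⟨y, hy⟩ := hG.preconnected.exists_adj_of_nontrivial x
  exact Finset.sum_pos (fun z _ => gw_pos hδ F _) ⟨y, by simpa using hy⟩

theorem Wt_symm (δ : ℝ) (F : Finset (Sym2 V)) (x y : V) : Wt δ F x y = Wt δ F y x := by
  unfold Wt; rw [Sym2.eq_swap]

theorem Wt_nonneg {δ : ℝ} (hδ : 0 < δ) (F : Finset (Sym2 V)) (x y : V) : 0 ≤ Wt δ F x y := by
  unfold Wt; split_ifs <;> [exact hδ.le; exact le_rfl]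

theorem pf_graph (G : SimpleGraph V) [DecidableRel G.Adj] (hG : G.Connected)
    (hV : 3 ≤ Fintype.card V) {δ : ℝ} (hδ : 0 < δ) (F : Finset (Sym2 V)) (hF : F.Nonempty) :
    ∃ φ ρ, IsPF G δ F φ ρ := by
  obtain ⟨e, he⟩ := hF
  obtain ⟨φ, ρ, h1, h2, h3, h4⟩ := pf_exists (Wt δ F) (dw G δ F) (dw_pos G hG hV hδ F)
    (Wt_symm δ F) (Wt_nonneg hδ F) (by
      induction e using Sym2.ind with
      | _ x y => exact ⟨x, y, by simp [Wt, he, hδ]⟩)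
  exact ⟨φ, ρ, h1, h2, h3, h4⟩

theorem IsPF.step {G : SimpleGraph V} [DecidableRel G.Adj] {δ : ℝ} (hδ : 0 < δ)
    {F : Finset (Sym2 V)} {φ : V → ℝ} {ρ : ℝ} (h : IsPF G δ F φ ρ) {x y : V}
    (hx : 0 < φ x) (hxy : s(x, y) ∈ F) : 0 < φ y := by
  rcases (h.nonneg y).lt_or_eq with h0 | h0
  · exact h0
  exfalso
  have h1 := h.eig y
  rw [← h0, mul_zero] at h1
  have h2 : Wt δ F y x * φ x ≤ ∑ z, Wt δ F y z * φ z :=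
    Finset.single_le_sum (f := fun z => Wt δ F y z * φ z)
      (fun z _ => mul_nonneg (Wt_nonneg hδ F y z) (h.nonneg z)) (Finset.mem_univ x)
  have h3 : Wt δ F y x = δ := by unfold Wt; rw [if_pos]; rwa [Sym2.eq_swap]
  rw [h3] at h2
  have := mul_pos hδ hx
  linarith

theorem IsPF.memVerts {G : SimpleGraph V} [DecidableRel G.Adj] {δ : ℝ}
    {F : Finset (Sym2 V)} {φ : V → ℝ} {ρ : ℝ} (h : IsPF G δ F φ ρ) (hd : ∀ x, 0 < dw G δ F x)
    {x : V} (hx : 0 < φ x) : memVerts F x := by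
  by_contra hc
  have h1 := h.eig x
  rw [Finset.sum_eq_zero] at h1
  · have := mul_pos (mul_pos h.rpos (hd x)) hx
    linarith
  · intro y _
    unfold Wt
    rw [if_neg, zero_mul]
    intro hm
    exact hc ⟨_, hm, by simp⟩

theorem reach_ind (F : Finset (Sym2 V)) (P : V → Prop)
    (hP : ∀ x y, P x → s(x, y) ∈ F → P y) {x y : V} (hx : P x)
    (h : (SimpleGraph.fromEdgeSet (↑F : Set (Sym2 V))).Reachable x y) : P y := by
  obtain ⟨p⟩ := h
  induction p with
  | nil => exact hx
  | cons hadj _ ih =>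
    apply ih
    apply hP _ _ hx
    rw [SimpleGraph.fromEdgeSet_adj] at hadj
    exact_mod_cast hadj.1

theorem IsPF.pos {G : SimpleGraph V} [DecidableRel G.Adj] {δ : ℝ} (hδ : 0 < δ) {v₁ : V}
    {F : Finset (Sym2 V)} {φ : V → ℝ} {ρ : ℝ} (h : IsPF G δ F φ ρ) (hd : ∀ x, 0 < dw G δ F x)
    (hF : F ∈ scrS G v₁) {x : V} (hx : ORRW.memVerts F x) : 0 < φ x := by
  obtain ⟨x1, hx1⟩ := h.nz
  exact reach_ind F (fun z => 0 < φ z) (fun a b ha hab => h.step hδ ha hab) hx1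
    (hF.2.2 x1 x (h.memVerts hd hx1) hx)

theorem adj_lemma (F F2 : Finset (Sym2 V)) (hne : F.Nonempty) (hss : F ⊂ F2)
    (hc : ∀ x y : V, memVerts F2 x → memVerts F2 y →
      (SimpleGraph.fromEdgeSet (↑F2 : Set (Sym2 V))).Reachable x y) :
    ∃ e ∈ F2 \ F, ∃ e' ∈ F, edgeAdj e e' := by
  obtain ⟨e', he'⟩ := hne
  obtain ⟨e, he2, heF⟩ := Finset.exists_of_ssubset hss
  by_contra hcon
  push Not at hcon
  have hx : e'.out.1 ∈ e' := Sym2.out_fst_mem e'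
  have hy : e.out.1 ∈ e := Sym2.out_fst_mem e
  have h1 : memVerts F e.out.1 := by
    refine reach_ind F2 (fun z => memVerts F z) ?_ (x := e'.out.1) ⟨e', he', hx⟩
      (hc _ _ ⟨e', hss.1 he', hx⟩ ⟨e, he2, hy⟩)
    rintro a b ⟨f, hf, haf⟩ hab
    by_cases hm : s(a, b) ∈ F
    · exact ⟨_, hm, by simp⟩
    · exact absurd ⟨a, by simp, haf⟩ (hcon s(a, b) (by simp [hab, hm]) f hf)
  obtain ⟨f, hf, hff⟩ := h1
  exact hcon e (by simp [he2, heF]) f hf ⟨_, hy, hff⟩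

theorem edge_mem_scrS (G : SimpleGraph V) [DecidableRel G.Adj] (hG : G.Connected)
    (hV : 3 ≤ Fintype.card V) (v₁ : V) : G.edgeFinset ∈ scrS G v₁ := by
  have : Nontrivial V := Fintype.one_lt_card_iff_nontrivial.1 (by omega)
  obtain ⟨y, hy⟩ := hG.preconnected.exists_adj_of_nontrivial v₁
  refine ⟨subset_rfl, ⟨s(v₁, y), by simpa using hy, by simp⟩, ?_⟩
  intro x y _ _
  simp only [SimpleGraph.coe_edgeFinset, SimpleGraph.fromEdgeSet_edgeSet]
  exact hG.preconnected x y

theorem sum_Wt (G : SimpleGraph V) [DecidableRel G.Adj] (δ : ℝ) (F : Finset (Sym2 V))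
    (hF : F ⊆ G.edgeFinset) (x : V) (f : V → ℝ) :
    ∑ y, Wt δ F x y * f y = ∑ y ∈ G.neighborFinset x, Wt δ F x y * f y := by
  symm
  apply Finset.sum_subset (Finset.subset_univ _)
  intro y _ hy
  unfold Wt
  rw [if_neg, zero_mul]
  intro hm
  have := hF hm
  simp at this hy
  exact hy this

theorem IsPF.lt_one {G : SimpleGraph V} [DecidableRel G.Adj] (hG : G.Connected)
    (hV : 3 ≤ Fintype.card V) {δ : ℝ} (hδ : 0 < δ) {v₁ : V}
    {F : Finset (Sym2 V)} {φ : V → ℝ} {ρ : ℝ} (h : IsPF G δ F φ ρ)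
    (hF : F ∈ scrS G v₁) (hFE : F ≠ G.edgeFinset) : ρ < 1 := by
  have hd := dw_pos G hG hV hδ F
  have hne : F.Nonempty := by obtain ⟨e, he, -⟩ := hF.2.1; exact ⟨e, he⟩
  obtain ⟨e, he, e', he', v, hv, hv'⟩ := adj_lemma F G.edgeFinset hne
    (hF.1.ssubset_of_ne hFE) (edge_mem_scrS G hG hV v₁).2.2
  obtain ⟨z, rfl⟩ := hv
  have hvp : 0 < φ v := h.pos hδ hd hF ⟨e', he', hv'⟩
  rw [Finset.mem_sdiff, SimpleGraph.mem_edgeFinset, SimpleGraph.mem_edgeSet] at he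
  have hle : ∀ x, ∀ y ∈ G.neighborFinset x, Wt δ F x y * 1 ≤ gw δ F s(x, y) := by
    intro x y _
    unfold Wt gw; split_ifs <;> simp
  have hsle : ∀ x, ∑ y, Wt δ F x y * 1 ≤ dw G δ F x := by
    intro x
    rw [sum_Wt G δ F hF.1]
    exact Finset.sum_le_sum (hle x)
  have hslt : ∑ y, Wt δ F v y * 1 < dw G δ F v := by
    rw [sum_Wt G δ F hF.1]
    refine Finset.sum_lt_sum (hle v) ⟨z, by simpa using he.1, ?_⟩
    simp [Wt, gw, he.2]
  have h1 : ∑ x, ∑ y, Wt δ F x y * φ y = ρ * ∑ x, dw G δ F x * φ x := by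
    rw [Finset.mul_sum]
    exact Finset.sum_congr rfl fun x _ => by rw [h.eig x, mul_assoc]
  have h2 : ∑ x, ∑ y, Wt δ F x y * φ y = ∑ y, (∑ x, Wt δ F y x * 1) * φ y := by
    rw [Finset.sum_comm]
    refine Finset.sum_congr rfl fun y _ => ?_
    rw [Finset.sum_mul]
    exact Finset.sum_congr rfl fun x _ => by rw [Wt_symm δ F x y, mul_one]
  have h3 : ∑ y, (∑ x, Wt δ F y x * 1) * φ y < ∑ y, dw G δ F y * φ y :=
    Finset.sum_lt_sum (fun y _ => mul_le_mul_of_nonneg_right (hsle y) (h.nonneg y))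
      ⟨v, Finset.mem_univ _, mul_lt_mul_of_pos_right hslt hvp⟩
  have h4 : 0 < ∑ y, dw G δ F y * φ y :=
    Finset.sum_pos' (fun y _ => mul_nonneg (hd y).le (h.nonneg y))
      ⟨v, Finset.mem_univ _, mul_pos (hd v) hvp⟩
  by_contra hcon
  have := mul_le_mul_of_nonneg_right (not_lt.1 hcon) h4.le
  linarith

theorem insert_scrS {G : SimpleGraph V} [DecidableRel G.Adj] {v₁ : V} {F : Finset (Sym2 V)}
    {x y : V} (hF : (F ∈ scrS G v₁ ∧ memVerts F x) ∨ (F = ∅ ∧ x = v₁)) (hxy : G.Adj x y) :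
    insert s(x, y) F ∈ scrS G v₁ := by
  have hall : ∀ z, memVerts (insert s(x, y) F) z →
      (SimpleGraph.fromEdgeSet (↑(insert s(x, y) F) : Set (Sym2 V))).Reachable x z := by
    rintro z ⟨e, he, hz⟩
    rw [Finset.mem_insert] at he
    rcases he with rfl | he
    · rw [Sym2.mem_iff] at hz
      rcases hz with rfl | rfl
      · exact SimpleGraph.Reachable.refl _
      · apply SimpleGraph.Adj.reachable
        rw [SimpleGraph.fromEdgeSet_adj]
        exact ⟨by simp, hxy.ne⟩
    · rcases hF with ⟨hF, hx⟩ | ⟨rfl, -⟩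
      · refine (hF.2.2 x z hx ⟨e, he, hz⟩).mono ?_
        apply SimpleGraph.fromEdgeSet_mono
        simp
      · simp at he
  refine ⟨?_, ?_, fun a b ha hb => (hall a ha).symm.trans (hall b hb)⟩
  · intro e he
    rw [Finset.mem_insert] at he
    rcases he with rfl | he
    · simpa using hxy
    · rcases hF with ⟨hF, hx⟩ | ⟨rfl, -⟩
      · exact hF.1 he
      · simp at he
  · rcases hF with ⟨hF, hx⟩ | ⟨-, rfl⟩
    · obtain ⟨e, he, h⟩ := hF.2.1
      exact ⟨e, Finset.mem_insert_of_mem he, h⟩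
    · exact ⟨s(x, y), by simp, by simp⟩

end Sub2

section Sub3

variable {V : Type} [Fintype V] [LinearOrder V]

def Kop (G : SimpleGraph V) [DecidableRel G.Adj] (δ : ℝ) (S0 : Set (Finset (Sym2 V)))
    (Ψ : V → Finset (Sym2 V) → ℝ) : V → Finset (Sym2 V) → ℝ := fun x F =>
  ∑ y, if insert s(x, y) F ∈ S0 then phat G δ F x y * Ψ y (insert s(x, y) F) else 0

def En (G : SimpleGraph V) [DecidableRel G.Adj] (δ : ℝ) (v₁ : V) (S0 : Set (Finset (Sym2 V)))
    (n : ℕ) (Ψ : V → Finset (Sym2 V) → ℝ) : ℝ :=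
  ∑ f : Fin (n + 1) → V,
    if ∀ k, 1 ≤ k → k ≤ n → pathEdges ((List.ofFn f).take (k + 1)) ∈ S0 then
      trajProb G δ v₁ n f * Ψ (f (Fin.last n)) (pathEdges (List.ofFn f))
    else 0

theorem pathEdges_append (l : List V) (x y : V) :
    pathEdges (l ++ [x] ++ [y]) = insert s(x, y) (pathEdges (l ++ [x])) := by
  induction l with
  | nil => simp [pathEdges]
  | cons a t ih =>
    cases t with
    | nil => simpa [pathEdges] using Finset.pair_comm _ _
    | cons b t =>
      simp only [List.cons_append, pathEdges] at ih ⊢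
      rw [ih, Finset.insert_comm]

theorem ofFn_last {n : ℕ} (g : Fin (n + 1) → V) :
    List.ofFn g = List.ofFn (fun i : Fin n => g i.castSucc) ++ [g (Fin.last n)] := by
  rw [List.ofFn_succ', List.concat_eq_append]

theorem ofFn_snoc {n : ℕ} (g : Fin (n + 1) → V) (y : V) :
    List.ofFn (Fin.snoc (α := fun _ => V) g y : Fin (n + 2) → V) = List.ofFn g ++ [y] := by
  rw [ofFn_last]; simp

theorem En_succ (G : SimpleGraph V) [DecidableRel G.Adj] (δ : ℝ) (v₁ : V)
    (S0 : Set (Finset (Sym2 V))) (n : ℕ) (Ψ : V → Finset (Sym2 V) → ℝ) :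
    En G δ v₁ S0 (n + 1) Ψ = En G δ v₁ S0 n (Kop G δ S0 Ψ) := by
  unfold En
  rw [← (Fin.snocEquiv (fun _ : Fin (n + 2) => V)).sum_comp, Fintype.sum_prod_type,
    Finset.sum_comm]
  refine Finset.sum_congr rfl fun g _ => ?_
  have hE : ∀ y, pathEdges (List.ofFn g ++ [y])
      = insert s(g (Fin.last n), y) (pathEdges (List.ofFn g)) := by
    intro y
    rw [ofFn_last g, pathEdges_append]
  have hT : ∀ y, trajProb G δ v₁ (n + 1) (Fin.snoc (α := fun _ => V) g y)
      = trajProb G δ v₁ n g * phat G δ (pathEdges (List.ofFn g)) (g (Fin.last n)) y := by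
    intro y
    unfold trajProb
    have h0 : (Fin.snoc (α := fun _ => V) g y : Fin (n + 2) → V) 0 = g 0 := by
      rw [← Fin.castSucc_zero]
      exact Fin.snoc_castSucc (α := fun _ => V) (x := y) (p := g) (i := 0)
    rw [h0, ofFn_snoc]
    split_ifs
    · have h1 : (List.ofFn g).reverse
          = g (Fin.last n) :: (List.ofFn (fun i : Fin n => g i.castSucc)).reverse := by
        rw [ofFn_last g]; simp
      have h2 : (List.ofFn g ++ [y]).reverse
          = y :: g (Fin.last n) :: (List.ofFn (fun i : Fin n => g i.castSucc)).reverse := by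
        rw [List.reverse_append, h1]; simp
      rw [h2]
      simp only [stepsProb]
      rw [← h1, List.reverse_reverse, mul_comm]
    · simp
  have hgood : ∀ y, (∀ k, 1 ≤ k → k ≤ n + 1 →
        pathEdges ((List.ofFn g ++ [y]).take (k + 1)) ∈ S0) ↔
      ((∀ k, 1 ≤ k → k ≤ n → pathEdges ((List.ofFn g).take (k + 1)) ∈ S0) ∧
        insert s(g (Fin.last n), y) (pathEdges (List.ofFn g)) ∈ S0) := by
    intro y
    have ht : ∀ k, k ≤ n → (List.ofFn g ++ [y]).take (k + 1) = (List.ofFn g).take (k + 1) := by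
      intro k hk
      rw [List.take_append_of_le_length]
      simp; omega
    have ht2 : (List.ofFn g ++ [y]).take (n + 1 + 1) = List.ofFn g ++ [y] := by
      apply List.take_of_length_le
      simp
    constructor
    · intro h
      refine ⟨fun k h1 h2 => ?_, ?_⟩
      · rw [← ht k h2]; exact h k h1 (by omega)
      · have := h (n + 1) (by omega) le_rfl
        rwa [ht2, hE] at this
    · rintro ⟨h1, h2⟩ k hk1 hk2
      rcases Nat.lt_or_ge n k with h | h
      · obtain rfl : k = n + 1 := by omega
        rwa [ht2, hE]
      · rw [ht k h]; exact h1 k hk1 h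
  have hs : ∀ y, (Fin.snocEquiv (fun _ : Fin (n + 2) => V)) (y, g)
      = Fin.snoc (α := fun _ => V) g y := fun y => rfl
  simp only [hs, ofFn_snoc, hgood, hT, Fin.snoc_last, hE]
  by_cases hg : ∀ k, 1 ≤ k → k ≤ n → pathEdges ((List.ofFn g).take (k + 1)) ∈ S0
  · rw [if_pos hg]
    simp only [Kop]
    rw [Finset.mul_sum]
    refine Finset.sum_congr rfl fun y _ => ?_
    by_cases hi : insert s(g (Fin.last n), y) (pathEdges (List.ofFn g)) ∈ S0
    · have : ((∀ k, 1 ≤ k → k ≤ n → pathEdges ((List.ofFn g).take (k + 1)) ∈ S0) ∧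
        insert s(g (Fin.last n), y) (pathEdges (List.ofFn g)) ∈ S0) := ⟨hg, hi⟩
      rw [if_pos this, if_pos hi, mul_assoc]
    · rw [if_neg (fun h => hi h.2), if_neg hi, mul_zero]
  · rw [if_neg hg]
    exact Finset.sum_eq_zero fun y _ => if_neg (fun h => hg h.1)

theorem En_zero (G : SimpleGraph V) [DecidableRel G.Adj] (δ : ℝ) (v₁ : V)
    (S0 : Set (Finset (Sym2 V))) (Ψ : V → Finset (Sym2 V) → ℝ) :
    En G δ v₁ S0 0 Ψ = Ψ v₁ ∅ := by
  unfold En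
  rw [← (Equiv.funUnique (Fin 1) V).symm.sum_comp]
  rw [Finset.sum_eq_single v₁]
  · rw [if_pos (by intro k h1 h2; omega)]
    simp [trajProb, stepsProb, pathEdges]
  · intro b _ hb
    rw [if_pos (by intro k h1 h2; omega)]
    simp [trajProb, hb]
  · simp

theorem En_eq (G : SimpleGraph V) [DecidableRel G.Adj] (δ : ℝ) (v₁ : V)
    (S0 : Set (Finset (Sym2 V))) (n : ℕ) : ∀ (Ψ : V → Finset (Sym2 V) → ℝ),
    En G δ v₁ S0 n Ψ = ((Kop G δ S0)^[n] Ψ) v₁ ∅ := by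
  induction n with
  | zero => intro Ψ; simp [En_zero]
  | succ n ih => intro Ψ; rw [En_succ, ih, Function.iterate_succ_apply]

theorem probTgt_eq (G : SimpleGraph V) [DecidableRel G.Adj] (δ : ℝ) (v₁ : V)
    (S0 : Set (Finset (Sym2 V))) (n : ℕ) :
    probTgt G δ v₁ S0 n = ((Kop G δ S0)^[n] (fun _ _ => 1)) v₁ ∅ := by
  rw [← En_eq]
  unfold probTgt En
  simp

theorem phat_nonneg (G : SimpleGraph V) [DecidableRel G.Adj] {δ : ℝ} (hδ : 0 < δ)
    (F : Finset (Sym2 V)) (x y : V) : 0 ≤ phat G δ F x y := by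
  unfold phat
  split_ifs
  · exact div_nonneg (gw_pos hδ _ _).le (Finset.sum_nonneg fun z _ => (gw_pos hδ _ _).le)
  · exact le_rfl

theorem phat_sum (G : SimpleGraph V) [DecidableRel G.Adj] (hG : G.Connected)
    (hV : 3 ≤ Fintype.card V) {δ : ℝ} (hδ : 0 < δ)
    (F : Finset (Sym2 V)) (x : V) : ∑ y, phat G δ F x y = 1 := by
  have hd := dw_pos G hG hV hδ F x
  have : ∑ y ∈ G.neighborFinset x, phat G δ F x y = ∑ y, phat G δ F x y := by
    apply Finset.sum_subset (Finset.subset_univ _)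
    intro y _ hy
    simp at hy
    simp [phat, hy]
  rw [← this]
  have h2 : ∀ y ∈ G.neighborFinset x, phat G δ F x y = gw δ F s(x, y) / dw G δ F x := by
    intro y hy
    simp at hy
    simp [phat, hy, dw]
  rw [Finset.sum_congr rfl h2, ← Finset.sum_div]
  exact div_self hd.ne'

theorem Kop_mono (G : SimpleGraph V) [DecidableRel G.Adj] {δ : ℝ} (hδ : 0 < δ)
    (S0 : Set (Finset (Sym2 V))) (Ψ Ψ' : V → Finset (Sym2 V) → ℝ)
    (h : ∀ x, ∀ F ∈ S0, memVerts F x → Ψ x F ≤ Ψ' x F) (x : V) (F : Finset (Sym2 V)) :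
    Kop G δ S0 Ψ x F ≤ Kop G δ S0 Ψ' x F := by
  unfold Kop
  refine Finset.sum_le_sum fun y _ => ?_
  split_ifs with hi
  · refine mul_le_mul_of_nonneg_left (h y _ hi ⟨s(x, y), by simp, by simp⟩) (phat_nonneg G hδ _ _ _)
  · exact le_rfl

theorem Kop_smul (G : SimpleGraph V) [DecidableRel G.Adj] (δ : ℝ)
    (S0 : Set (Finset (Sym2 V))) (Ψ : V → Finset (Sym2 V) → ℝ) (c : ℝ)
    (x : V) (F : Finset (Sym2 V)) :
    Kop G δ S0 (fun x F => c * Ψ x F) x F = c * Kop G δ S0 Ψ x F := by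
  unfold Kop
  rw [Finset.mul_sum]
  refine Finset.sum_congr rfl fun y _ => ?_
  split_ifs <;> ring

theorem Kop_iter_nonneg (G : SimpleGraph V) [DecidableRel G.Adj] {δ : ℝ} (hδ : 0 < δ)
    (S0 : Set (Finset (Sym2 V))) (n : ℕ) :
    ∀ (Ψ : V → Finset (Sym2 V) → ℝ) (_ : ∀ x F, 0 ≤ Ψ x F) (x : V) (F : Finset (Sym2 V)),
    0 ≤ (Kop G δ S0)^[n] Ψ x F := by
  induction n with
  | zero => intro Ψ h; simpa using h
  | succ n ih =>
    intro Ψ h x F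
    rw [Function.iterate_succ_apply]
    apply ih
    intro x F
    unfold Kop
    refine Finset.sum_nonneg fun y _ => ?_
    split_ifs
    · exact mul_nonneg (phat_nonneg G hδ _ _ _) (h _ _)
    · exact le_rfl

end Sub3

section Sub4

theorem exists_lower {A : Type} [Finite A] [Nonempty A] (P : A → Prop) (f : A → ℝ)
    (h : ∀ a, P a → 0 < f a) : ∃ c : ℝ, 0 < c ∧ ∀ a, P a → c ≤ f a := by
  obtain ⟨a0, ha0⟩ := Finite.exists_min (fun a => if P a then f a else 1)
  refine ⟨if P a0 then f a0 else 1, ?_, ?_⟩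
  · split_ifs with h0
    · exact h a0 h0
    · exact one_pos
  · intro a ha
    have := ha0 a
    simp only [if_pos ha] at this
    exact this

variable {V : Type} [Fintype V] [LinearOrder V]

theorem phat_of_mem (G : SimpleGraph V) [DecidableRel G.Adj] (δ : ℝ) (F : Finset (Sym2 V))
    (hF : F ⊆ G.edgeFinset) (x y : V) (h : s(x, y) ∈ F) :
    phat G δ F x y = Wt δ F x y / dw G δ F x := by
  have : G.Adj x y := by simpa using hF h
  simp [phat, this, gw, Wt, h, dw]

theorem IsPF.eigK {G : SimpleGraph V} [DecidableRel G.Adj] {δ : ℝ}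
    {F : Finset (Sym2 V)} {φ : V → ℝ} {ρ : ℝ} (h : IsPF G δ F φ ρ) (hd : ∀ x, 0 < dw G δ F x)
    (hF : F ⊆ G.edgeFinset) (x : V) :
    ∑ y, (if s(x, y) ∈ F then phat G δ F x y * φ y else 0) = ρ * φ x := by
  have h1 : ∀ y, (if s(x, y) ∈ F then phat G δ F x y * φ y else 0)
      = (Wt δ F x y * φ y) / dw G δ F x := by
    intro y
    split_ifs with hm
    · rw [phat_of_mem G δ F hF x y hm]; ring
    · simp [Wt, hm]
  simp_rw [h1]
  rw [← Finset.sum_div, h.eig x]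
  have := (hd x).ne'
  field_simp

theorem upper_bound (G : SimpleGraph V) [DecidableRel G.Adj] (hG : G.Connected)
    (hV : 3 ≤ Fintype.card V) (v₁ : V) {δ : ℝ} (hδ : 0 < δ)
    (S0 : Set (Finset (Sym2 V))) (hS0sub : S0 ⊆ scrS G v₁)
    (φ : Finset (Sym2 V) → V → ℝ) (ρ : Finset (Sym2 V) → ℝ)
    (hpf : ∀ F ∈ S0, IsPF G δ F (φ F) (ρ F)) (lam : ℝ) (hlam : ∀ F ∈ S0, ρ F < lam)
    (hlam0 : 0 < lam) :
    ∃ C : ℝ, 0 < C ∧ ∀ n, probTgt G δ v₁ S0 (n + 1) ≤ C * lam ^ n := by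
  have hd := dw_pos G hG hV hδ
  have : Nonempty V := ⟨v₁⟩
  have hφpos : ∀ F ∈ S0, ∀ x, memVerts F x → 0 < φ F x := fun F hF x hx =>
    (hpf F hF).pos hδ (hd F) (hS0sub hF) hx
  obtain ⟨c, hc, hcφ⟩ := exists_lower (A := V × Finset (Sym2 V))
    (fun a => a.2 ∈ S0 ∧ memVerts a.2 a.1) (fun a => φ a.2 a.1) (fun a ha => hφpos _ ha.1 _ ha.2)
  obtain ⟨η, hη, hηρ⟩ := exists_lower (A := Finset (Sym2 V))
    (fun F => F ∈ S0) (fun F => lam - ρ F) (fun F hF => sub_pos.2 (hlam F hF))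
  obtain ⟨a0, ha0⟩ := Finite.exists_max (fun a : V × Finset (Sym2 V) => φ a.2 a.1)
  set C := |φ a0.2 a0.1| + 1 with hC
  have hCp : 0 < C := by positivity
  have hφC : ∀ F x, φ F x ≤ C := fun F x => by
    have := ha0 (x, F)
    have h2 := le_abs_self (φ a0.2 a0.1)
    simp only at this
    linarith
  set m := η * c / C with hm
  have hmp : 0 < m := by positivity
  have hmC : m * C = η * c := by rw [hm]; field_simp
  set Φ : V → Finset (Sym2 V) → ℝ := fun x F => m ^ F.card * φ F x with hΦ
  have hKΦ : ∀ x, ∀ F ∈ S0, memVerts F x → Kop G δ S0 Φ x F ≤ lam * Φ x F := by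
    intro x F hF hx
    have hterm : ∀ y, (if insert s(x, y) F ∈ S0 then phat G δ F x y * Φ y (insert s(x, y) F) else 0)
        ≤ m ^ F.card * ((if s(x, y) ∈ F then phat G δ F x y * φ F y else 0)
          + phat G δ F x y * (η * c)) := by
      intro y
      have hp := phat_nonneg G hδ F x y
      have hmF : 0 < m ^ F.card := by positivity
      have hηc : 0 < η * c := by positivity
      have hpn : 0 ≤ phat G δ F x y * (η * c) := by positivity
      by_cases hm1 : s(x, y) ∈ F
      · rw [Finset.insert_eq_of_mem hm1, if_pos hF, if_pos hm1]
        simp only [hΦ]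
        have : 0 ≤ m ^ F.card * (phat G δ F x y * (η * c)) := by positivity
        linarith
      · rw [if_neg hm1]
        split_ifs with hi
        · simp only [hΦ]
          rw [Finset.card_insert_of_notMem hm1, zero_add, ← hmC]
          have h1 := mul_le_mul_of_nonneg_left (hφC (insert s(x, y) F) y)
            (by positivity : 0 ≤ phat G δ F x y * (m ^ F.card * m))
          calc _ = phat G δ F x y * (m ^ F.card * m) * φ (insert s(x, y) F) y := by ring
            _ ≤ _ := h1
            _ = _ := by ring
        · rw [zero_add]; positivity
    calc Kop G δ S0 Φ x F ≤ ∑ y, m ^ F.card * ((if s(x, y) ∈ F then phat G δ F x y * φ F y else 0)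
          + phat G δ F x y * (η * c)) := Finset.sum_le_sum fun y _ => hterm y
      _ = m ^ F.card * (ρ F * φ F x + η * c) := by
        rw [← Finset.mul_sum, Finset.sum_add_distrib,
          (hpf F hF).eigK (hd F) (hS0sub hF).1, ← Finset.sum_mul, phat_sum G hG hV hδ, one_mul]
      _ ≤ m ^ F.card * (lam * φ F x) := by
        apply mul_le_mul_of_nonneg_left _ (by positivity)
        have h1 := hcφ (x, F) ⟨hF, hx⟩
        have h2 := hηρ F hF
        simp only at h1
        nlinarith [mul_le_mul_of_nonneg_left h1 hη.le,
          mul_le_mul_of_nonneg_right h2 (hφpos F hF x hx).le]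
      _ = lam * Φ x F := by simp only [hΦ]; ring
  obtain ⟨c1, hc1, hc1Φ⟩ := exists_lower (A := V × Finset (Sym2 V))
    (fun a => a.2 ∈ S0 ∧ memVerts a.2 a.1) (fun a => Φ a.1 a.2)
    (fun a ha => mul_pos (by positivity) (hφpos _ ha.1 _ ha.2))
  have hiter : ∀ n, ∀ x, ∀ F ∈ S0, memVerts F x →
      (Kop G δ S0)^[n] (fun _ _ => 1) x F ≤ (c1⁻¹ * lam ^ n) * Φ x F := by
    intro n
    induction n with
    | zero =>
      intro x F hF hx
      have := hc1Φ (x, F) ⟨hF, hx⟩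
      simp only [Function.iterate_zero, id_eq, pow_zero, mul_one]
      rw [← div_eq_inv_mul, le_div_iff₀ hc1]; linarith
    | succ n ih =>
      intro x F hF hx
      rw [Function.iterate_succ_apply']
      refine (Kop_mono G hδ S0 _ _ ih x F).trans ?_
      rw [Kop_smul]
      refine (mul_le_mul_of_nonneg_left (hKΦ x F hF hx) (by positivity)).trans (le_of_eq ?_)
      ring
  refine ⟨c1⁻¹ * (|Kop G δ S0 Φ v₁ ∅| + 1), by positivity, fun n => ?_⟩
  rw [probTgt_eq, Function.iterate_succ_apply']
  refine (Kop_mono G hδ S0 _ _ (hiter n) v₁ ∅).trans ?_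
  rw [Kop_smul]
  have h1 : Kop G δ S0 Φ v₁ ∅ ≤ |Kop G δ S0 Φ v₁ ∅| + 1 := by
    have := le_abs_self (Kop G δ S0 Φ v₁ ∅); linarith
  refine (mul_le_mul_of_nonneg_left h1 (by positivity)).trans (le_of_eq ?_)
  ring

def RR (G : SimpleGraph V) [DecidableRel G.Adj] (δ : ℝ) (S0 : Set (Finset (Sym2 V)))
    (x : V) (F : Finset (Sym2 V)) (x' : V) (F' : Finset (Sym2 V)) : Prop :=
  ∃ (m : ℕ) (c : ℝ), 0 < c ∧ ∀ Ψ : V → Finset (Sym2 V) → ℝ, (∀ x F, 0 ≤ Ψ x F) →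
    c * Ψ x' F' ≤ (Kop G δ S0)^[m] Ψ x F

theorem RR.refl (G : SimpleGraph V) [DecidableRel G.Adj] (δ : ℝ) (S0 : Set (Finset (Sym2 V)))
    (x : V) (F : Finset (Sym2 V)) : RR G δ S0 x F x F :=
  ⟨0, 1, one_pos, fun Ψ _ => by simp⟩

theorem RR.trans {G : SimpleGraph V} [DecidableRel G.Adj] {δ : ℝ} (hδ : 0 < δ)
    {S0 : Set (Finset (Sym2 V))} {x y z : V} {F F' F'' : Finset (Sym2 V)}
    (h1 : RR G δ S0 x F y F') (h2 : RR G δ S0 y F' z F'') : RR G δ S0 x F z F'' := by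
  obtain ⟨m1, c1, hc1, h1⟩ := h1
  obtain ⟨m2, c2, hc2, h2⟩ := h2
  refine ⟨m1 + m2, c1 * c2, mul_pos hc1 hc2, fun Ψ hΨ => ?_⟩
  rw [Function.iterate_add_apply, mul_assoc]
  exact (mul_le_mul_of_nonneg_left (h2 Ψ hΨ) hc1.le).trans
    (h1 _ (Kop_iter_nonneg G hδ S0 m2 Ψ hΨ))

theorem RR.step {G : SimpleGraph V} [DecidableRel G.Adj] (hG : G.Connected)
    (hV : 3 ≤ Fintype.card V) {δ : ℝ} (hδ : 0 < δ)
    {S0 : Set (Finset (Sym2 V))} {x y : V} {F : Finset (Sym2 V)} (hxy : G.Adj x y)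
    (hi : insert s(x, y) F ∈ S0) : RR G δ S0 x F y (insert s(x, y) F) := by
  refine ⟨1, phat G δ F x y, ?_, fun Ψ hΨ => ?_⟩
  · simp only [phat, if_pos hxy]
    exact div_pos (gw_pos hδ _ _) (dw_pos G hG hV hδ F x)
  · rw [Function.iterate_one]
    unfold Kop
    have := Finset.single_le_sum
      (f := fun y => if insert s(x, y) F ∈ S0 then phat G δ F x y * Ψ y (insert s(x, y) F) else 0)
      (fun y _ => by
        split_ifs
        · exact mul_nonneg (phat_nonneg G hδ _ _ _) (hΨ _ _)
        · exact le_rfl) (Finset.mem_univ y)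
    simp only [if_pos hi] at this
    exact this

theorem cover (G : SimpleGraph V) [DecidableRel G.Adj] (hG : G.Connected)
    (hV : 3 ≤ Fintype.card V) (v₁ : V) {δ : ℝ} (hδ : 0 < δ)
    (S0 : Set (Finset (Sym2 V))) (hS0sub : S0 ⊆ scrS G v₁)
    (hS0dec : DecreasingIn G v₁ S0) (F : Finset (Sym2 V)) (hF : F ∈ S0) :
    ∃ x, memVerts F x ∧ RR G δ S0 v₁ ∅ x F := by
  have hFS := hS0sub hF
  set Inv : V → Finset (Sym2 V) → Prop := fun x F' => F' ⊆ F ∧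
    ((F' ∈ scrS G v₁ ∧ memVerts F' x) ∨ (F' = ∅ ∧ x = v₁)) with hInv
  have hv1 : memVerts F v₁ := hFS.2.1
  have hstep : ∀ x F' y, Inv x F' → s(x, y) ∈ F →
      RR G δ S0 x F' y (insert s(x, y) F') ∧ Inv y (insert s(x, y) F') := by
    rintro x F' y ⟨h1, h2⟩ hm
    have hxy : G.Adj x y := by simpa using hFS.1 hm
    have hs := insert_scrS h2 hxy
    have hsub : insert s(x, y) F' ⊆ F := Finset.insert_subset hm h1
    exact ⟨RR.step hG hV hδ hxy (hS0dec _ F hs hFS hsub hF), hsub,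
      Or.inl ⟨hs, ⟨s(x, y), by simp, by simp⟩⟩⟩
  have hmemF : ∀ x F', Inv x F' → memVerts F x := by
    rintro x F' ⟨h1, ⟨-, e, he, hx⟩ | ⟨-, rfl⟩⟩
    · exact ⟨e, h1 he, hx⟩
    · exact hv1
  have hwalk : ∀ x F' y, Inv x F' → memVerts F y →
      ∃ F'', F' ⊆ F'' ∧ Inv y F'' ∧ RR G δ S0 x F' y F'' := by
    intro x F' y hI hy
    refine reach_ind F (fun z => ∃ F'', F' ⊆ F'' ∧ Inv z F'' ∧ RR G δ S0 x F' z F'') ?_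
      ⟨F', subset_rfl, hI, RR.refl G δ S0 x F'⟩ (hFS.2.2 x y (hmemF x F' hI) hy)
    rintro a b ⟨F'', h1, h2, h3⟩ hab
    have := hstep a F'' b h2 hab
    exact ⟨_, h1.trans (Finset.subset_insert _ _), this.2, h3.trans hδ this.1⟩
  have hcov : ∀ T : Finset (Sym2 V), T ⊆ F → ∃ x F', T ⊆ F' ∧ Inv x F' ∧ RR G δ S0 v₁ ∅ x F' := by
    intro T
    induction T using Finset.induction_on with
    | empty => exact fun _ => ⟨v₁, ∅, subset_rfl, ⟨by simp, Or.inr ⟨rfl, rfl⟩⟩, RR.refl G δ S0 v₁ ∅⟩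
    | insert e T _ ih =>
      intro hT
      obtain ⟨x, F', h1, h2, h3⟩ := ih ((Finset.subset_insert _ _).trans hT)
      have heF : e ∈ F := hT (Finset.mem_insert_self _ _)
      induction e using Sym2.ind with
      | _ u v =>
        obtain ⟨F'', h4, h5, h6⟩ := hwalk x F' u h2 ⟨_, heF, by simp⟩
        have := hstep u F'' v h5 heF
        exact ⟨v, _, Finset.insert_subset_insert _ (h1.trans h4), this.2,
          (h3.trans hδ h6).trans hδ this.1⟩
  obtain ⟨x, F', h1, h2, h3⟩ := hcov F subset_rfl
  obtain rfl : F' = F := h2.1.antisymm h1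
  exact ⟨x, hmemF x _ h2, h3⟩

theorem lower_bound (G : SimpleGraph V) [DecidableRel G.Adj] (hG : G.Connected)
    (hV : 3 ≤ Fintype.card V) (v₁ : V) {δ : ℝ} (hδ : 0 < δ)
    (S0 : Set (Finset (Sym2 V))) (hS0sub : S0 ⊆ scrS G v₁)
    (hS0dec : DecreasingIn G v₁ S0) (F : Finset (Sym2 V)) (hF : F ∈ S0)
    (φ : V → ℝ) (ρ : ℝ) (hpf : IsPF G δ F φ ρ) :
    ∃ (c : ℝ) (m : ℕ), 0 < c ∧ ∀ n, c * ρ ^ n ≤ probTgt G δ v₁ S0 (m + n) := by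
  obtain ⟨x, hx, m, c, hc, h⟩ := cover G hG hV v₁ hδ S0 hS0sub hS0dec F hF
  have hd := dw_pos G hG hV hδ F
  have : Nonempty V := ⟨v₁⟩
  obtain ⟨a0, ha0⟩ := Finite.exists_max φ
  have hx0 := hpf.pos hδ hd (hS0sub hF) hx
  have hC : 0 < φ a0 := lt_of_lt_of_le hx0 (ha0 x)
  have hρ := hpf.rpos
  have hiter : ∀ n, ∀ y, ρ ^ n * φ y / φ a0 ≤ (Kop G δ S0)^[n] (fun _ _ => 1) y F := by
    intro n
    induction n with
    | zero =>
      intro y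
      simp only [pow_zero, one_mul, Function.iterate_zero, id_eq]
      rw [div_le_one hC]; exact ha0 y
    | succ n ih =>
      intro y
      rw [Function.iterate_succ_apply']
      calc ρ ^ (n + 1) * φ y / φ a0 = ∑ z, (ρ ^ n / φ a0) *
            (if s(y, z) ∈ F then phat G δ F y z * φ z else 0) := by
            rw [← Finset.mul_sum, hpf.eigK hd (hS0sub hF).1]; ring
        _ ≤ _ := by
            unfold Kop
            refine Finset.sum_le_sum fun z _ => ?_
            by_cases hm : s(y, z) ∈ F
            · rw [if_pos hm, Finset.insert_eq_of_mem hm, if_pos hF]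
              refine le_trans (le_of_eq ?_) (mul_le_mul_of_nonneg_left (ih z) (phat_nonneg G hδ F y z))
              ring
            · rw [if_neg hm, mul_zero]
              split_ifs
              · exact mul_nonneg (phat_nonneg G hδ _ _ _)
                  (Kop_iter_nonneg G hδ S0 n _ (fun _ _ => zero_le_one) _ _)
              · exact le_rfl
  refine ⟨c * (φ x / φ a0), m, by positivity, fun n => ?_⟩
  rw [probTgt_eq, Function.iterate_add_apply]
  refine le_trans ?_ (h _ (Kop_iter_nonneg G hδ S0 n _ (fun _ _ => zero_le_one)))
  refine le_trans (le_of_eq ?_) (mul_le_mul_of_nonneg_left (hiter n x) hc.le)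
  ring

end Sub4

theorem lin_tendsto (A B s : ℝ) :
    Tendsto (fun n : ℕ => (A + ((n : ℝ) - s) * B) / n) atTop (nhds B) := by
  have h1 : Tendsto (fun n : ℕ => (A - s * B) / (n : ℝ) + B) atTop (nhds (0 + B)) :=
    (tendsto_const_div_atTop_nhds_zero_nat _).add tendsto_const_nhds
  rw [zero_add] at h1
  refine h1.congr' ?_
  filter_upwards [eventually_ge_atTop 1] with n hn
  have : (n : ℝ) ≠ 0 := by positivity
  field_simp; ring

theorem log_limit (p : ℕ → ℝ) (ρ : ℝ) (hρ : 0 < ρ)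
    (hlow : ∃ (c : ℝ) (m : ℕ), 0 < c ∧ ∀ n, c * ρ ^ n ≤ p (m + n))
    (hup : ∀ lam, ρ < lam → ∃ C : ℝ, 0 < C ∧ ∀ n, p (n + 1) ≤ C * lam ^ n) :
    Tendsto (fun n : ℕ => Real.log (p n) / n) atTop (nhds (Real.log ρ)) := by
  obtain ⟨c, m, hc, hlow⟩ := hlow
  have hpos : ∀ n, m ≤ n → c * ρ ^ (n - m) ≤ p n := by
    intro n hn
    have := hlow (n - m)
    rwa [Nat.add_sub_cancel' hn] at this
  rw [tendsto_order]
  constructor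
  · intro b hb
    filter_upwards [(tendsto_order.1 (lin_tendsto (Real.log c) (Real.log ρ) m)).1 b hb,
      eventually_ge_atTop (m + 1)] with n hn hnm
    refine hn.trans_le ?_
    have hn0 : (0 : ℝ) < n := by exact_mod_cast (by omega : 0 < n)
    rw [div_le_div_iff_of_pos_right hn0]
    have h1 := Real.log_le_log (by positivity) (hpos n (by omega))
    rw [Real.log_mul hc.ne' (by positivity), Real.log_pow, Nat.cast_sub (by omega)] at h1
    exact h1
  · intro b hb
    set l := (b + Real.log ρ) / 2 with hl
    obtain ⟨C, hC, hup⟩ := hup (Real.exp l) (by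
      rw [← Real.log_lt_iff_lt_exp hρ, hl]; linarith)
    filter_upwards [(tendsto_order.1 (lin_tendsto (Real.log C) l 1)).2 b (by rw [hl]; linarith),
      eventually_ge_atTop (m + 1)] with n hn hnm
    refine lt_of_le_of_lt ?_ hn
    have hn0 : (0 : ℝ) < n := by exact_mod_cast (by omega : 0 < n)
    rw [div_le_div_iff_of_pos_right hn0]
    have hp : 0 < p n := lt_of_lt_of_le (by positivity) (hpos n (by omega))
    have h2 := hup (n - 1)
    rw [Nat.sub_add_cancel (by omega)] at h2
    have h1 := Real.log_le_log hp h2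
    rw [Real.log_mul hC.ne' (by positivity), Real.log_pow, Nat.cast_sub (by omega),
      Real.log_exp] at h1
    simpa using h1

section Sub6

variable {V : Type} [Fintype V] [LinearOrder V]

theorem z_edge (G : SimpleGraph V) [DecidableRel G.Adj] (z : VSet G) :
    z.1.1 = s(zm G z, zp G z) := by
  obtain ⟨⟨e, he⟩, b⟩ := z
  induction e using Sym2.ind with
  | _ x y =>
    rcases le_total x y with h | h <;> cases b <;>
      simp [zm, zp, sym2lo, sym2hi, h]

theorem z_adj (G : SimpleGraph V) [DecidableRel G.Adj] (z : VSet G) :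
    G.Adj (zm G z) (zp G z) := by
  have h := z.1.2
  rw [z_edge] at h
  simpa using h

theorem z_inj (G : SimpleGraph V) [DecidableRel G.Adj] (z w : VSet G)
    (h1 : zm G z = zm G w) (h2 : zp G z = zp G w) : z = w := by
  have h3 : z.1 = w.1 := Subtype.ext (by rw [z_edge, z_edge, h1, h2])
  have h4 := (z_adj G z).ne
  obtain ⟨e, b⟩ := z
  obtain ⟨e', b'⟩ := w
  simp only at h3
  subst h3
  cases b <;> cases b' <;> simp_all [zm, zp]

theorem z_surj (G : SimpleGraph V) [DecidableRel G.Adj] {x y : V} (h : G.Adj x y) :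
    ∃ z : VSet G, zm G z = x ∧ zp G z = y := by
  refine ⟨(⟨s(x, y), by simpa using h⟩, decide (x < y)), ?_⟩
  rcases lt_trichotomy x y with h1 | h1 | h1
  · simp [zm, zp, sym2lo, sym2hi, h1, h1.le]
  · exact absurd h1 h.ne
  · simp [zm, zp, sym2lo, sym2hi, h1.le, not_lt.2 h1.le]

theorem sum_out (G : SimpleGraph V) [DecidableRel G.Adj] (x : V) (f : V → ℝ) :
    ∑ w : VSet G, (if x = zm G w then f (zp G w) else 0) = ∑ y ∈ G.neighborFinset x, f y := by
  rw [← Finset.sum_filter]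
  refine Finset.sum_bij (fun w _ => zp G w) ?_ ?_ ?_ ?_
  · intro w hw
    simp only [Finset.mem_filter, Finset.mem_univ, true_and] at hw
    have := z_adj G w
    rw [← hw] at this
    simpa using this
  · intro a ha b hb hab
    simp only [Finset.mem_filter, Finset.mem_univ, true_and] at ha hb
    exact z_inj G a b (ha.symm.trans hb) hab
  · intro y hy
    obtain ⟨z, h1, h2⟩ := z_surj G (by simpa using hy : G.Adj x y)
    exact ⟨z, by simp [h1], h2⟩
  · intro w _; rfl

theorem sum_in (G : SimpleGraph V) [DecidableRel G.Adj] (x : V) (f : V → ℝ) :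
    ∑ w : VSet G, (if zp G w = x then f (zm G w) else 0) = ∑ y ∈ G.neighborFinset x, f y := by
  rw [← Finset.sum_filter]
  refine Finset.sum_bij (fun w _ => zm G w) ?_ ?_ ?_ ?_
  · intro w hw
    simp only [Finset.mem_filter, Finset.mem_univ, true_and] at hw
    have := (z_adj G w).symm
    rw [hw] at this
    simpa using this
  · intro a ha b hb hab
    simp only [Finset.mem_filter, Finset.mem_univ, true_and] at ha hb
    exact z_inj G a b hab (ha.trans hb.symm)
  · intro y hy
    obtain ⟨z, h1, h2⟩ := z_surj G (by simpa using hy : G.Adj x y).symm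
    exact ⟨z, by simp [h2], h1⟩
  · intro w _; rfl

theorem pS_eq (G : SimpleGraph V) [DecidableRel G.Adj] (δ : ℝ) (F : Finset (Sym2 V))
    (z w : VSet G) : pS G δ F z w =
      if zp G z = zm G w then gw δ F w.1.1 / dw G δ F (zp G z) else 0 := by
  unfold pS
  have : ∑ w : VSet G, (if zp G z = zm G w then gw δ F w.1.1 else 0) = dw G δ F (zp G z) := by
    unfold dw
    rw [← sum_out G (zp G z) (fun y => gw δ F s(zp G z, y))]
    refine Finset.sum_congr rfl fun w _ => ?_
    split_ifs with h
    · rw [z_edge G w, ← h]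
    · rfl
  rw [this]

def reR {A : Type} [Fintype A] (ν : A → ℝ) (q p : A → A → ℝ) : ℝ :=
  ∑ a, ν a * ∑ b, q a b * Real.log (q a b / p a b)

theorem EReal_sum {ι : Type} (s : Finset ι) (f : ι → ℝ) :
    ∑ i ∈ s, ((f i : ℝ) : EReal) = ((∑ i ∈ s, f i : ℝ) : EReal) := by
  induction s using Finset.induction_on with
  | empty => simp
  | insert a s ha ih => rw [Finset.sum_insert ha, Finset.sum_insert ha, ih, EReal.coe_add]

theorem relEntInt_coe_s14 {A : Type} [Fintype A] (ν : A → ℝ) (q p : A → A → ℝ)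
    (h : ∀ a b, p a b = 0 → q a b = 0) : relEntInt ν q p = ((reR ν q p : ℝ) : EReal) := by
  unfold relEntInt reR
  rw [← EReal_sum]
  refine Finset.sum_congr rfl fun a _ => ?_
  unfold relEnt
  rw [if_pos (h a), EReal.coe_mul]

theorem TS_ac (G : SimpleGraph V) [DecidableRel G.Adj] {δ : ℝ} (hδ : 0 < δ)
    (F : Finset (Sym2 V)) (hd : ∀ x, 0 < dw G δ F x) (q : VSet G → VSet G → ℝ) (hq : q ∈ TS G)
    (z w : VSet G) (h : pS G δ F z w = 0) : q z w = 0 := by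
  by_contra hne
  have := hq.2.2 z w hne
  rw [pS_eq, if_pos this] at h
  exact (div_pos (gw_pos hδ F _) (hd _)).ne' h

theorem sum_inv {A : Type} [Fintype A] (μ : A → ℝ) (hμ : ∑ a, μ a = 1) (q : A → A → ℝ)
    (hq : ∀ a, ∑ b, q a b = 1) (hinv : Invariant μ q) (L : A → ℝ) (k : ℝ) :
    ∑ z, μ z * ∑ w, q z w * (L w - k - L z) = -k := by
  have h1 : ∀ z, μ z * ∑ w, q z w * (L w - k - L z)
      = ∑ w, μ z * q z w * L w - μ z * k - μ z * L z := by
    intro z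
    have : ∑ w, q z w * (L w - k - L z) = ∑ w, q z w * L w - (k + L z) := by
      have h2 : ∀ w, q z w * (L w - k - L z) = q z w * L w - q z w * (k + L z) := by
        intro w; ring
      simp_rw [h2, Finset.sum_sub_distrib, ← Finset.sum_mul, hq z, one_mul]
    rw [this, mul_sub, Finset.mul_sum]
    simp_rw [mul_assoc]
    ring
  simp_rw [h1, Finset.sum_sub_distrib, ← Finset.sum_mul, hμ]
  rw [Finset.sum_comm]
  simp_rw [← Finset.sum_mul]
  have h3 : ∀ w, ∑ z, μ z * q z w = μ w := hinv
  simp_rw [h3]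
  ring

def Qk (G : SimpleGraph V) [DecidableRel G.Adj] (δ : ℝ) (F : Finset (Sym2 V)) (φ : V → ℝ) (ρ : ℝ)
    (z w : VSet G) : ℝ :=
  if zp G z = zm G w then
    Wt δ F (zp G z) (zp G w) * φ (zp G w) / (dw G δ F (zp G z) * ρ * φ (zp G z)) else 0

theorem Qk_nonneg {G : SimpleGraph V} [DecidableRel G.Adj] {δ : ℝ} (hδ : 0 < δ)
    {F : Finset (Sym2 V)} {φ : V → ℝ} {ρ : ℝ} (h : IsPF G δ F φ ρ) (hd : ∀ x, 0 < dw G δ F x)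
    (z w : VSet G) : 0 ≤ Qk G δ F φ ρ z w := by
  unfold Qk
  split_ifs
  · exact div_nonneg (mul_nonneg (Wt_nonneg hδ _ _ _) (h.nonneg _))
      (mul_nonneg (mul_nonneg (hd _).le h.rpos.le) (h.nonneg _))
  · exact le_rfl

theorem Qk_sum {G : SimpleGraph V} [DecidableRel G.Adj] {δ : ℝ}
    {F : Finset (Sym2 V)} (hF : F ⊆ G.edgeFinset) {φ : V → ℝ} {ρ : ℝ} (h : IsPF G δ F φ ρ)
    (hd : ∀ x, 0 < dw G δ F x)
    (z : VSet G) (hz : 0 < φ (zp G z)) : ∑ w, Qk G δ F φ ρ z w = 1 := by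
  unfold Qk
  rw [sum_out G (zp G z) (fun y => Wt δ F (zp G z) y * φ y / (dw G δ F (zp G z) * ρ * φ (zp G z))),
    ← Finset.sum_div, ← sum_Wt G δ F hF, h.eig]
  have := (hd (zp G z)).ne'
  have := h.rpos.ne'
  field_simp

theorem rate_lower {G : SimpleGraph V} [DecidableRel G.Adj] {v₁ : V} {δ : ℝ} (hδ : 0 < δ)
    {F : Finset (Sym2 V)} (hF : F ∈ scrS G v₁) {φ : V → ℝ} {ρ : ℝ} (h : IsPF G δ F φ ρ)
    (hd : ∀ x, 0 < dw G δ F x) (μ : ProbMeas (VSet G)) (hμ : ∀ z, μ.1 z ≠ 0 → z.1.1 ∈ F)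
    (q : VSet G → VSet G → ℝ) (hq : q ∈ TS G) (hinv : Invariant μ.1 q) :
    -Real.log ρ ≤ reR μ.1 q (pS G δ F) := by
  rw [← sum_inv μ.1 μ.2.2 q hq.2.1 hinv (fun z => Real.log (φ (zp G z))) (Real.log ρ)]
  unfold reR
  have hpos : ∀ z, μ.1 z ≠ 0 → 0 < φ (zp G z) := fun z hz =>
    h.pos hδ hd hF ⟨_, hμ z hz, by rw [z_edge G z]; simp⟩
  refine Finset.sum_le_sum fun z _ => ?_
  by_cases hz : μ.1 z = 0
  · simp [hz]
  refine mul_le_mul_of_nonneg_left ?_ (μ.2.1 z)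
  have hφz := hpos z hz
  have hrow : ∀ w, q z w * (Real.log (φ (zp G w)) - Real.log ρ - Real.log (φ (zp G z)))
      + (q z w - Qk G δ F φ ρ z w) ≤ q z w * Real.log (q z w / pS G δ F z w) := by
    intro w
    by_cases hqw : q z w = 0
    · simp only [hqw, zero_mul, zero_add, zero_sub]
      have := Qk_nonneg hδ h hd z w
      linarith
    have hqp : 0 < q z w := lt_of_le_of_ne (hq.1 z w) (Ne.symm hqw)
    have hμz : 0 < μ.1 z := lt_of_le_of_ne (μ.2.1 z) (Ne.symm hz)
    have hμw : μ.1 w ≠ 0 := by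
      rw [← hinv w]
      apply ne_of_gt
      exact Finset.sum_pos' (fun a _ => mul_nonneg (μ.2.1 a) (hq.1 a w))
        ⟨z, Finset.mem_univ _, mul_pos hμz hqp⟩
    have hwF := hμ w hμw
    have hφw := hpos w hμw
    have hzw := hq.2.2 z w hqw
    have hdz := hd (zp G z)
    have hρ := h.rpos
    have hp : pS G δ F z w = δ / dw G δ F (zp G z) := by
      rw [pS_eq, if_pos hzw, gw, if_pos hwF]
    have hQ : Qk G δ F φ ρ z w = δ * φ (zp G w) / (dw G δ F (zp G z) * ρ * φ (zp G z)) := by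
      have : s(zp G z, zp G w) ∈ F := by rw [hzw, ← z_edge]; exact hwF
      simp only [Qk, if_pos hzw, Wt, if_pos this]
    have hQp : 0 < Qk G δ F φ ρ z w := by rw [hQ]; positivity
    have e1 : Real.log (q z w / pS G δ F z w) - (Real.log (φ (zp G w)) - Real.log ρ
        - Real.log (φ (zp G z))) = Real.log (q z w / Qk G δ F φ ρ z w) := by
      rw [hp, hQ, Real.log_div hqw (by positivity), Real.log_div hδ.ne' hdz.ne',
        Real.log_div hqw (by positivity), Real.log_div (by positivity) (by positivity),
        Real.log_mul hδ.ne' hφw.ne', Real.log_mul (by positivity) hφz.ne',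
        Real.log_mul hdz.ne' hρ.ne']
      ring
    have e2 := Real.one_sub_inv_le_log_of_pos (div_pos hqp hQp)
    have e3 := mul_le_mul_of_nonneg_left e2 hqp.le
    rw [← e1] at e3
    have e4 : q z w * (1 - (q z w / Qk G δ F φ ρ z w)⁻¹) = q z w - Qk G δ F φ ρ z w := by
      rw [inv_div]; field_simp
    rw [e4] at e3
    linarith
  have hs := Finset.sum_le_sum (s := Finset.univ) (fun w _ => hrow w)
  rw [Finset.sum_add_distrib, Finset.sum_sub_distrib, hq.2.1 z, Qk_sum hF.1 h hd z hφz] at hs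
  linarith

theorem pS_sum (G : SimpleGraph V) [DecidableRel G.Adj] (δ : ℝ) (F : Finset (Sym2 V))
    (hd : ∀ x, 0 < dw G δ F x) (z : VSet G) : ∑ w, pS G δ F z w = 1 := by
  have : ∀ w, pS G δ F z w = if zp G z = zm G w then
      gw δ F s(zp G z, zp G w) / dw G δ F (zp G z) else 0 := by
    intro w
    rw [pS_eq]
    split_ifs with h
    · rw [z_edge G w, h]
    · rfl
  simp_rw [this]
  rw [sum_out G (zp G z) (fun y => gw δ F s(zp G z, y) / dw G δ F (zp G z)), ← Finset.sum_div]
  exact div_self (hd _).ne'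

theorem rate_attain {G : SimpleGraph V} [DecidableRel G.Adj] {δ : ℝ} (hδ : 0 < δ)
    {F : Finset (Sym2 V)} (hF : F ⊆ G.edgeFinset) {φ : V → ℝ} {ρ : ℝ} (h : IsPF G δ F φ ρ)
    (hd : ∀ x, 0 < dw G δ F x) :
    ∃ (μ : ProbMeas (VSet G)) (q : VSet G → VSet G → ℝ), (∀ z, μ.1 z ≠ 0 → z.1.1 ∈ F) ∧
      q ∈ TS G ∧ Invariant μ.1 q ∧ reR μ.1 q (pS G δ F) = -Real.log ρ := by
  set m : VSet G → ℝ := fun z => Wt δ F (zm G z) (zp G z) * φ (zm G z) * φ (zp G z) with hm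
  have hm0 : ∀ z, 0 ≤ m z := fun z =>
    mul_nonneg (mul_nonneg (Wt_nonneg hδ _ _ _) (h.nonneg _)) (h.nonneg _)
  set c := ∑ z, m z with hc
  have hρ := h.rpos
  have hcp : 0 < c := by
    obtain ⟨x, hx⟩ := h.nz
    obtain ⟨e, he, y, rfl⟩ := h.memVerts hd hx
    have hy := h.step hδ hx he
    obtain ⟨z, h1, h2⟩ := z_surj G (by simpa using hF he : G.Adj x y)
    refine Finset.sum_pos' (fun z _ => hm0 z) ⟨z, Finset.mem_univ _, ?_⟩
    simp only [hm, h1, h2, Wt, if_pos he]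
    positivity
  set μ : ProbMeas (VSet G) := ⟨fun z => c⁻¹ * m z,
    fun z => mul_nonneg (inv_nonneg.2 hcp.le) (hm0 z), by
      rw [← Finset.mul_sum]; exact inv_mul_cancel₀ hcp.ne'⟩ with hμ
  set q : VSet G → VSet G → ℝ := fun z w =>
    if 0 < φ (zp G z) then Qk G δ F φ ρ z w else pS G δ F z w with hq
  have hμm : ∀ z, μ.1 z = c⁻¹ * m z := fun z => rfl
  have hpos : ∀ z, μ.1 z ≠ 0 → 0 < φ (zp G z) := by
    intro z hz
    rcases (h.nonneg (zp G z)).lt_or_eq with h0 | h0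
    · exact h0
    · exact absurd (by simp [hμm, hm, ← h0]) hz
  have hTS : q ∈ TS G := by
    refine ⟨fun z w => ?_, fun z => ?_, fun z w hne => ?_⟩
    · simp only [hq]
      split_ifs
      · exact Qk_nonneg hδ h hd z w
      · rw [pS_eq]; split_ifs
        · exact (div_pos (gw_pos hδ _ _) (hd _)).le
        · exact le_rfl
    · simp only [hq]
      split_ifs with h0
      · exact Qk_sum hF h hd z h0
      · exact pS_sum G δ F hd z
    · by_contra hcon
      apply hne
      simp only [hq, Qk, pS, if_neg hcon]
      simp
  have hinv : Invariant μ.1 q := by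
    intro w
    rcases (h.nonneg (zm G w)).lt_or_eq with h0 | h0
    · have h1 : ∀ z, μ.1 z * q z w = if zp G z = zm G w then
          (c⁻¹ * Wt δ F (zm G w) (zp G w) * φ (zp G w) / (dw G δ F (zm G w) * ρ))
            * (Wt δ F (zm G w) (zm G z) * φ (zm G z)) else 0 := by
        intro z
        split_ifs with hz
        · have h00 : 0 < φ (zp G z) := by rw [hz]; exact h0
          have hdz := hd (zm G w)
          simp only [hq, if_pos h00, Qk, if_pos hz, hμm, hm, hz, if_true]
          rw [Wt_symm δ F (zm G z) (zm G w)]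
          field_simp
        · simp [hq, Qk, pS, hz]
      simp_rw [h1]
      rw [sum_in G (zm G w) (fun y => (c⁻¹ * Wt δ F (zm G w) (zp G w) * φ (zp G w) /
        (dw G δ F (zm G w) * ρ)) * (Wt δ F (zm G w) y * φ y)), ← Finset.mul_sum,
        ← sum_Wt G δ F hF, h.eig, hμm]
      have hdz := hd (zm G w)
      simp only [hm]
      field_simp
    · have hw : μ.1 w = 0 := by simp [hμm, hm, ← h0]
      rw [hw]
      refine Finset.sum_eq_zero fun z _ => ?_
      by_cases hz : zp G z = zm G w
      · have : μ.1 z = 0 := by simp [hμm, hm, hz, ← h0]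
        rw [this, zero_mul]
      · simp [hq, Qk, pS, hz]
  refine ⟨μ, q, ?_, hTS, hinv, ?_⟩
  · intro z hz
    by_contra hcon
    rw [z_edge] at hcon
    exact hz (by simp [hμm, hm, Wt, hcon])
  · rw [← sum_inv μ.1 μ.2.2 q hTS.2.1 hinv (fun z => Real.log (φ (zp G z))) (Real.log ρ)]
    unfold reR
    refine Finset.sum_congr rfl fun z _ => ?_
    by_cases hz : μ.1 z = 0
    · simp [hz]
    congr 1
    refine Finset.sum_congr rfl fun w _ => ?_
    have hφz := hpos z hz
    by_cases hqw : q z w = 0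
    · simp [hqw]
    congr 1
    have hzw := hTS.2.2 z w hqw
    have hqe : q z w = Wt δ F (zp G z) (zp G w) * φ (zp G w)
        / (dw G δ F (zp G z) * ρ * φ (zp G z)) := by
      simp only [hq, if_pos hφz, Qk, if_pos hzw]
    have hwF : s(zp G z, zp G w) ∈ F := by
      by_contra hcon
      exact hqw (by rw [hqe]; simp [Wt, hcon])
    have hφw : 0 < φ (zp G w) := h.step hδ hφz hwF
    have hwF' : w.1.1 ∈ F := by rw [z_edge, ← hzw]; exact hwF
    have hdz := hd (zp G z)
    rw [hqe, pS_eq, if_pos hzw, gw, if_pos hwF', Wt, if_pos hwF]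
    rw [Real.log_div (by positivity) (by positivity), Real.log_div (by positivity) (by positivity),
        Real.log_div hδ.ne' hdz.ne',
        Real.log_mul hδ.ne' hφw.ne', Real.log_mul (by positivity) hφz.ne',
        Real.log_mul hdz.ne' hρ.ne']
    ring

theorem chain_exists (G : SimpleGraph V) [DecidableRel G.Adj] (hG : G.Connected)
    (hV : 3 ≤ Fintype.card V) (v₁ : V) (F : Finset (Sym2 V)) (hF : F ∈ scrS G v₁) :
    ∃ Es ∈ seqE G v₁, ∃ k, Es k = F := by
  obtain ⟨e0, he0, hv0⟩ := hF.2.1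
  have hE := edge_mem_scrS G hG hV v₁
  have hnext : ∀ T : Finset (Sym2 V), ∃ T' : Finset (Sym2 V),
      T.Nonempty → T ⊂ G.edgeFinset → (T ⊆ F ∨ F ⊆ T) →
      T ⊂ T' ∧ T'.card = T.card + 1 ∧ T' ⊆ G.edgeFinset ∧ (T' ⊆ F ∨ F ⊆ T') ∧
        ∀ e ∈ T' \ T, ∃ e' ∈ T, edgeAdj e e' := by
    intro T
    by_cases hne : T.Nonempty
    swap
    · exact ⟨∅, fun h => absurd h hne⟩
    by_cases hTE : T ⊂ G.edgeFinset
    swap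
    · exact ⟨∅, fun _ h => absurd h hTE⟩
    have key : ∀ e, e ∉ T → e ∈ G.edgeFinset → (∃ e' ∈ T, edgeAdj e e') →
        (insert e T ⊆ F ∨ F ⊆ insert e T) →
        T ⊂ insert e T ∧ (insert e T).card = T.card + 1 ∧ insert e T ⊆ G.edgeFinset ∧
          (insert e T ⊆ F ∨ F ⊆ insert e T) ∧
        ∀ e1 ∈ insert e T \ T, ∃ e' ∈ T, edgeAdj e1 e' := by
      intro e h1 h2 h3 h4
      refine ⟨Finset.ssubset_insert h1, Finset.card_insert_of_notMem h1,
        Finset.insert_subset h2 hTE.1, h4, ?_⟩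
      intro e1 he1
      rw [Finset.mem_sdiff, Finset.mem_insert] at he1
      rcases he1.1 with rfl | hh
      · exact h3
      · exact absurd hh he1.2
    by_cases hTF : T ⊂ F
    · obtain ⟨e, he, h3⟩ := adj_lemma T F hne hTF hF.2.2
      rw [Finset.mem_sdiff] at he
      exact ⟨insert e T, fun _ _ _ => key e he.2 (hF.1 he.1) h3
        (Or.inl (Finset.insert_subset he.1 hTF.1))⟩
    · obtain ⟨e, he, h3⟩ := adj_lemma T G.edgeFinset hne hTE hE.2.2
      rw [Finset.mem_sdiff] at he
      refine ⟨insert e T, fun _ _ h => key e he.2 he.1 h3 (Or.inr ?_)⟩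
      rcases h with h | h
      · have : T = F := by
          by_contra hcon
          exact hTF (h.ssubset_of_ne hcon)
        rw [← this]; exact Finset.subset_insert _ _
      · exact h.trans (Finset.subset_insert _ _)
  choose nx hnx using hnext
  have hP : ∀ n, n < G.edgeFinset.card →
      (nx^[n] {e0}).card = n + 1 ∧ nx^[n] {e0} ⊆ G.edgeFinset ∧
        (nx^[n] {e0} ⊆ F ∨ F ⊆ nx^[n] {e0}) := by
    intro n
    induction n with
    | zero =>
      intro _
      simp only [Function.iterate_zero, id_eq, Finset.card_singleton, zero_add,
        Finset.singleton_subset_iff, true_and]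
      exact ⟨hF.1 he0, Or.inl he0⟩
    | succ n ih =>
      intro hn
      obtain ⟨h1, h2, h3⟩ := ih (by omega)
      have hne : (nx^[n] {e0}).Nonempty := Finset.card_pos.1 (by omega)
      have hss : nx^[n] {e0} ⊂ G.edgeFinset := by
        refine h2.ssubset_of_ne fun hh => ?_
        rw [hh] at h1; omega
      obtain ⟨a1, a2, a3, a4, a5⟩ := hnx _ hne hss h3
      rw [Function.iterate_succ_apply']
      exact ⟨by omega, a3, a4⟩
  have hS : ∀ n, n + 1 < G.edgeFinset.card → nx^[n] {e0} ⊂ nx^[n + 1] {e0} ∧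
      ∀ e ∈ nx^[n + 1] {e0} \ nx^[n] {e0}, ∃ e' ∈ nx^[n] {e0}, edgeAdj e e' := by
    intro n hn
    obtain ⟨h1, h2, h3⟩ := hP n (by omega)
    have hne : (nx^[n] {e0}).Nonempty := Finset.card_pos.1 (by omega)
    have hss : nx^[n] {e0} ⊂ G.edgeFinset := by
      refine h2.ssubset_of_ne fun hh => ?_
      rw [hh] at h1; omega
    obtain ⟨a1, a2, a3, a4, a5⟩ := hnx _ hne hss h3
    rw [Function.iterate_succ_apply']
    exact ⟨a1, a5⟩
  have hFc : 0 < F.card := Finset.card_pos.2 ⟨e0, he0⟩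
  have hFE := Finset.card_le_card hF.1
  refine ⟨fun k => nx^[(k : ℕ)] {e0}, ⟨fun k => (hP k k.2).2.1, fun k => (hP k k.2).1, ?_, ?_, ?_⟩,
    ⟨F.card - 1, by omega⟩, ?_⟩
  · intro k l hkl
    have := (hS k (by omega)).1
    rw [hkl] at this
    exact this
  · intro k hk
    simp only [hk]
    exact ⟨e0, by simp, hv0⟩
  · intro k l hkl
    have := (hS k (by omega)).2
    rw [hkl] at this
    exact this
  · obtain ⟨h1, h2, h3⟩ := hP (F.card - 1) (by omega)
    simp only
    rcases h3 with h3 | h3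
    · exact Finset.eq_of_subset_of_card_le h3 (by omega)
    · exact (Finset.eq_of_subset_of_card_le h3 (by omega)).symm

end Sub6

/-- `inf_{μ ∈ 𝒞(𝒮₀)} Λ_{δ,𝒮₀}(μ) ∈ (0, ∞)` and
`(1/n) log P_{v₁}(T_{𝒮₀} > n) → − inf_{μ ∈ 𝒞(𝒮₀)} Λ_{δ,𝒮₀}(μ)`. -/
theorem orrw_tail_decay_Lam {V : Type} [Fintype V] [LinearOrder V]
    (G : SimpleGraph V) [DecidableRel G.Adj] (hG : G.Connected)
    (hV : 3 ≤ Fintype.card V) (v₁ : V) (δ : ℝ) (hδ : 0 < δ)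
    (S0 : Set (Finset (Sym2 V))) (hS0ne : S0.Nonempty) (hS0sub : S0 ⊆ scrS G v₁)
    (hS0dec : DecreasingIn G v₁ S0) (hS0ne' : S0 ≠ scrS G v₁) :
    ∃ a : ℝ, sInf (Lam G v₁ δ S0 '' CC G S0) = ((a : ℝ) : EReal) ∧ 0 < a ∧
      Tendsto (fun n : ℕ => Real.log (probTgt G δ v₁ S0 n) / n) atTop (nhds (-a)) := by
  have hd := dw_pos G hG hV hδ
  have hne : ∀ F ∈ scrS G v₁, F.Nonempty := fun F hF => by
    obtain ⟨e, he, -⟩ := hF.2.1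
    exact ⟨e, he⟩
  have hEn : G.edgeFinset ∉ S0 := fun hE => hS0ne' (Set.Subset.antisymm hS0sub fun F hF =>
    hS0dec F _ hF (edge_mem_scrS G hG hV v₁) hF.1 hE)
  have hch : ∀ F : Finset (Sym2 V), ∃ (φ : V → ℝ) (ρ : ℝ), F.Nonempty → IsPF G δ F φ ρ := by
    intro F
    by_cases hF : F.Nonempty
    · obtain ⟨φ, ρ, h⟩ := pf_graph G hG hV hδ F hF
      exact ⟨φ, ρ, fun _ => h⟩
    · exact ⟨0, 0, fun h => absurd h hF⟩
  choose φ ρ hpf using hch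
  obtain ⟨Fs, hFs, hmax⟩ := Set.exists_max_image S0 ρ (Set.toFinite _) hS0ne
  have hFsS := hS0sub hFs
  have hpfs := hpf Fs (hne _ hFsS)
  have hρ0 := hpfs.rpos
  have hρ1 : ρ Fs < 1 := hpfs.lt_one hG hV hδ hFsS (fun h => hEn (h ▸ hFs))
  refine ⟨-Real.log (ρ Fs), le_antisymm ?_ ?_, ?_, ?_⟩
  · obtain ⟨Es, hEs, k0, hk0⟩ := chain_exists G hG hV v₁ Fs hFsS
    have hEne : ∀ k, (Es k).Nonempty := fun k => by
      rw [← Finset.card_pos, hEs.2.1 k]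
      omega
    have hat := fun k => rate_attain hδ (hEs.1 k) (hpf (Es k) (hEne k)) (hd (Es k))
    choose μs qs h1 h2 h3 h4 using hat
    refine (sInf_le (Set.mem_image_of_mem _ (show μs k0 ∈ CC G S0 from
      ⟨Fs, hFs, fun z hz => hk0 ▸ h1 k0 z hz⟩))).trans ?_
    refine sInf_le ⟨μs, fun k => if k = k0 then 1 else 0, Es, qs, hEs, ?_, ?_, ?_, h1, ?_, h2, h3, ?_⟩
    · intro k
      beta_reduce
      split_ifs <;> norm_num
    · intro k hk
      refine if_neg ?_
      rintro rfl
      exact hk (hk0 ▸ hFs)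
    · simp
    · intro z
      simp
    · have : ∀ k, (((if k = k0 then 1 else 0 : ℝ)) : EReal) *
          relEntInt (μs k).1 (qs k) (pS G δ (Es k)) =
          (((if k = k0 then 1 else 0 : ℝ) * -Real.log (ρ (Es k)) : ℝ) : EReal) := by
        intro k
        rw [relEntInt_coe_s14 _ _ _ (TS_ac G hδ (Es k) (hd _) (qs k) (h2 k)), h4 k, EReal.coe_mul]
      rw [Finset.sum_congr rfl fun k _ => this k, EReal_sum]
      simp [hk0]
  · refine le_sInf ?_
    rintro _ ⟨μ, -, rfl⟩
    refine le_sInf ?_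
    rintro c ⟨μs, r, Es, qs, hEs, hr0, hrS, hr1, hsup, -, hq, hinv, rfl⟩
    have : ∀ k, ((r k : ℝ) : EReal) * relEntInt (μs k).1 (qs k) (pS G δ (Es k)) =
        ((r k * reR (μs k).1 (qs k) (pS G δ (Es k)) : ℝ) : EReal) := by
      intro k
      rw [relEntInt_coe_s14 _ _ _ (TS_ac G hδ (Es k) (hd _) (qs k) (hq k)), EReal.coe_mul]
    rw [Finset.sum_congr rfl fun k _ => this k, EReal_sum, EReal.coe_le_coe_iff]
    calc -Real.log (ρ Fs) = ∑ k, r k * -Real.log (ρ Fs) := by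
          rw [← Finset.sum_mul, hr1, one_mul]
      _ ≤ _ := Finset.sum_le_sum fun k _ => ?_
    by_cases hk : Es k ∈ S0
    · refine mul_le_mul_of_nonneg_left ?_ (hr0 k)
      have hkS := hS0sub hk
      have hpk := hpf _ (hne _ hkS)
      refine le_trans ?_ (rate_lower hδ hkS hpk (hd _) (μs k) (hsup k) (qs k) (hq k) (hinv k))
      exact neg_le_neg (Real.log_le_log hpk.rpos (hmax _ hk))
    · simp [hrS k hk]
  · exact neg_pos.2 (Real.log_neg hρ0 hρ1)
  · rw [neg_neg]
    refine log_limit _ _ hρ0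
      (lower_bound G hG hV v₁ hδ S0 hS0sub hS0dec Fs hFs _ _ hpfs) fun lam hlam => ?_
    exact upper_bound G hG hV v₁ hδ S0 hS0sub φ ρ (fun F hF => hpf F (hne _ (hS0sub hF))) lam
      (fun F hF => (hmax F hF).trans_lt hlam) (hρ0.trans hlam)

end ORRW
end
end

section
/- Let 𝒮₀ be a nonempty decreasing subset of 𝒮. Then inf_{μ∈𝒞(𝒮₀)} Λ_{δ,𝒮₀}(μ) equals the infimum of Σ_{z∈V_S} μ(z)·R(q(z,·)‖p_{E₀}(z,·)) over all triples (μ,E₀,q) with E₀∈𝒮₀, q∈𝒯_S, μ∈𝒫(V_S), supp(μ|₁)⊆E₀ and μq=μ. -/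
open scoped BigOperators Classical ENNReal
open Filter Topology

noncomputable section
namespace ORRW

section Helpers

lemma ereal_sum_mul {ι : Type} (s : Finset ι) (r : ι → ℝ) (hr : ∀ k, 0 ≤ r k) (m : EReal) :
    ∑ k ∈ s, ((r k : ℝ) : EReal) * m = ((∑ k ∈ s, r k : ℝ) : EReal) * m := by
  induction s using Finset.induction_on with
  | empty => simp
  | insert a s ha ih =>
    rw [Finset.sum_insert ha, Finset.sum_insert ha, ih, EReal.coe_add,
      EReal.right_distrib_of_nonneg]
    · exact_mod_cast hr a
    · exact_mod_cast Finset.sum_nonneg (fun k _ => hr k)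

variable {V : Type} [Fintype V]

lemma grow (A B : Finset (Sym2 V)) (hAB : A ⊂ B) (hA : A.Nonempty)
    (hB : ∀ x y : V, memVerts B x → memVerts B y →
      (SimpleGraph.fromEdgeSet (↑B : Set (Sym2 V))).Reachable x y) :
    ∃ e, (e ∈ B ∧ e ∉ A) ∧ ∃ e' ∈ A, edgeAdj e e' := by
  by_contra hcon
  push Not at hcon
  obtain ⟨e0, he0⟩ := hA
  obtain ⟨e, heB, heA⟩ := Finset.exists_of_ssubset hAB
  have h1 : ∃ x, x ∈ e0 := by
    induction e0 with | h a b => exact ⟨a, by simp⟩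
  have h2 : ∃ x, x ∈ e := by
    induction e with | h a b => exact ⟨a, by simp⟩
  obtain ⟨x, hx⟩ := h1
  obtain ⟨y, hy⟩ := h2
  have hr := hB x y ⟨e0, hAB.1 he0, hx⟩ ⟨e, heB, hy⟩
  have key : ∀ u v : V, (SimpleGraph.fromEdgeSet (↑B : Set (Sym2 V))).Walk u v →
      memVerts A u → memVerts A v := by
    intro u v w
    induction w with
    | nil => exact id
    | @cons a b c hab _ ih =>
      intro hu
      apply ih
      rw [SimpleGraph.fromEdgeSet_adj] at hab
      have hm : s(a, b) ∈ B := by simpa using hab.1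
      by_cases hin : s(a, b) ∈ A
      · exact ⟨_, hin, by simp⟩
      · obtain ⟨e', he', hae'⟩ := hu
        exact absurd ⟨a, by simp, hae'⟩ (hcon _ ⟨hm, hin⟩ e' he')
  obtain ⟨w⟩ := hr
  obtain ⟨e', he', hye'⟩ := key x y w ⟨e0, he0, hx⟩
  exact hcon e ⟨heB, heA⟩ e' he' ⟨y, hy, hye'⟩

def nxt (B A : Finset (Sym2 V)) : Finset (Sym2 V) :=
  if h : ∃ e, (e ∈ B ∧ e ∉ A) ∧ ∃ e' ∈ A, edgeAdj e e' then insert h.choose A else A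

def growSeq (F E : Finset (Sym2 V)) (e0 : Sym2 V) : ℕ → Finset (Sym2 V)
  | 0 => {e0}
  | n + 1 => if growSeq F E e0 n ⊂ F then nxt F (growSeq F E e0 n) else nxt E (growSeq F E e0 n)

lemma nxt_spec (A B : Finset (Sym2 V)) (hAB : A ⊂ B) (hA : A.Nonempty)
    (hB : ∀ x y : V, memVerts B x → memVerts B y →
      (SimpleGraph.fromEdgeSet (↑B : Set (Sym2 V))).Reachable x y) :
    A ⊂ nxt B A ∧ nxt B A ⊆ B ∧ (nxt B A).card = A.card + 1 ∧
      ∀ e ∈ nxt B A \ A, ∃ e' ∈ A, edgeAdj e e' := by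
  have h := grow A B hAB hA hB
  have hs := h.choose_spec
  unfold nxt
  rw [dif_pos h]
  refine ⟨Finset.ssubset_insert hs.1.2, Finset.insert_subset hs.1.1 hAB.1,
    Finset.card_insert_of_notMem hs.1.2, ?_⟩
  intro e he
  rw [Finset.mem_sdiff, Finset.mem_insert] at he
  rcases he with ⟨he | he, hn⟩
  · rw [he]; exact hs.2
  · exact absurd he hn

lemma growSeq_spec (F E : Finset (Sym2 V)) (e0 : Sym2 V) (he0 : e0 ∈ F) (hFE : F ⊆ E)
    (hF : ∀ x y : V, memVerts F x → memVerts F y →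
      (SimpleGraph.fromEdgeSet (↑F : Set (Sym2 V))).Reachable x y)
    (hE : ∀ x y : V, memVerts E x → memVerts E y →
      (SimpleGraph.fromEdgeSet (↑E : Set (Sym2 V))).Reachable x y) :
    ∀ n, n < E.card → (growSeq F E e0 n).card = n + 1 ∧ growSeq F E e0 n ⊆ E ∧
      (n < F.card → growSeq F E e0 n ⊆ F) ∧
      (n + 1 < E.card → growSeq F E e0 n ⊂ growSeq F E e0 (n + 1) ∧
        (growSeq F E e0 (n + 1)).card = n + 2 ∧ growSeq F E e0 (n + 1) ⊆ E ∧
        (n + 1 < F.card → growSeq F E e0 (n + 1) ⊆ F) ∧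
        ∀ e ∈ growSeq F E e0 (n + 1) \ growSeq F E e0 n,
          ∃ e' ∈ growSeq F E e0 n, edgeAdj e e') := by
  have step : ∀ n, ((growSeq F E e0 n).card = n + 1 ∧ growSeq F E e0 n ⊆ E ∧
      (n < F.card → growSeq F E e0 n ⊆ F)) → 
      (n + 1 < E.card → growSeq F E e0 n ⊂ growSeq F E e0 (n + 1) ∧
        (growSeq F E e0 (n + 1)).card = n + 2 ∧ growSeq F E e0 (n + 1) ⊆ E ∧
        (n + 1 < F.card → growSeq F E e0 (n + 1) ⊆ F) ∧
        ∀ e ∈ growSeq F E e0 (n + 1) \ growSeq F E e0 n,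
          ∃ e' ∈ growSeq F E e0 n, edgeAdj e e') := by
    rintro n ⟨hc, hsE, hsF⟩ hn
    have hne : (growSeq F E e0 n).Nonempty := by
      rw [← Finset.card_pos]; omega
    by_cases hss : growSeq F E e0 n ⊂ F
    · obtain ⟨a, b, c, d⟩ := nxt_spec _ F hss hne hF
      simp only [growSeq, if_pos hss]
      exact ⟨a, by omega, b.trans hFE, fun _ => b, d⟩
    · have hEE : growSeq F E e0 n ⊂ E := by
        refine hsE.ssubset_of_ne ?_
        intro h; rw [h] at hc; omega
      obtain ⟨a, b, c, d⟩ := nxt_spec _ E hEE hne hE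
      simp only [growSeq, if_neg hss]
      refine ⟨a, by omega, b, fun h => ?_, d⟩
      exfalso
      apply hss
      refine (hsF (by omega)).ssubset_of_ne ?_
      intro h'; rw [h'] at hc; omega
  intro n
  induction n with
  | zero =>
    intro _
    have h0 : (growSeq F E e0 0).card = 0 + 1 ∧ growSeq F E e0 0 ⊆ E ∧
      (0 < F.card → growSeq F E e0 0 ⊆ F) := by
      refine ⟨by simp [growSeq], ?_, fun _ => ?_⟩
      · simpa [growSeq] using hFE he0
      · simpa [growSeq] using he0
    exact ⟨h0.1, h0.2.1, h0.2.2, step 0 h0⟩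
  | succ n ih =>
    intro hn
    obtain ⟨_, _, _, h4⟩ := ih (by omega)
    obtain ⟨_, a, b, c, _⟩ := h4 hn
    exact ⟨a, b, c, step (n + 1) ⟨a, b, c⟩⟩

end Helpers

section Helpers2

variable {V : Type} [Fintype V] [LinearOrder V]

def revZ (G : SimpleGraph V) [DecidableRel G.Adj] (z : VSet G) : VSet G := (z.1, !z.2)

def revQ (G : SimpleGraph V) [DecidableRel G.Adj] (z w : VSet G) : ℝ :=
  if w = revZ G z then 1 else 0

lemma revZ_revZ (G : SimpleGraph V) [DecidableRel G.Adj] (z : VSet G) :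
    revZ G (revZ G z) = z := by simp [revZ]

lemma revQ_mem (G : SimpleGraph V) [DecidableRel G.Adj] : revQ G ∈ TS G := by
  refine ⟨fun z w => ?_, fun z => ?_, fun z w h => ?_⟩
  · unfold revQ; split_ifs <;> norm_num
  · simp [revQ]
  · unfold revQ at h
    have hw : w = revZ G z := by
      by_contra hne; exact h (if_neg hne)
    subst hw
    rcases z with ⟨e, b⟩
    cases b <;> simp [zp, zm, revZ]

def halfM (G : SimpleGraph V) [DecidableRel G.Adj] (e : {e : Sym2 V // e ∈ G.edgeFinset}) :
    ProbMeas (VSet G) :=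
  ⟨fun z => if z.1 = e then 1 / 2 else 0, fun z => by dsimp only; split_ifs <;> norm_num, by
    rw [Fintype.sum_prod_type]
    simp⟩

lemma halfM_inv (G : SimpleGraph V) [DecidableRel G.Adj]
    (e : {e : Sym2 V // e ∈ G.edgeFinset}) : Invariant (halfM G e).1 (revQ G) := by
  intro y
  rw [Finset.sum_eq_single (revZ G y)]
  · simp [revQ, revZ_revZ, halfM]
    simp only [revZ]
    congr
  · intro z _ hz
    have : y ≠ revZ G z := by
      intro h; apply hz; rw [h, revZ_revZ]
    simp [revQ, this]
  · simp

end Helpers2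

/-- A one-block expression for `inf_{μ ∈ 𝒞(𝒮₀)} Λ_{δ,𝒮₀}(μ)`. -/
theorem orrw_alpha_expression {V : Type} [Fintype V] [LinearOrder V]
    (G : SimpleGraph V) [DecidableRel G.Adj] (hG : G.Connected)
    (hV : 3 ≤ Fintype.card V) (v₁ : V) (δ : ℝ) (hδ : 0 < δ)
    (S0 : Set (Finset (Sym2 V))) (hS0ne : S0.Nonempty) (hS0sub : S0 ⊆ scrS G v₁)
    (hS0dec : DecreasingIn G v₁ S0) :
    sInf (Lam G v₁ δ S0 '' CC G S0) =
      sInf { c : EReal |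
        ∃ (μ : ProbMeas (VSet G)) (F : Finset (Sym2 V)) (q : VSet G → VSet G → ℝ),
          F ∈ S0 ∧ q ∈ TS G ∧ (∀ z : VSet G, μ.1 z ≠ 0 → z.1.1 ∈ F) ∧
          Invariant μ.1 q ∧ c = relEntInt μ.1 q (pS G δ F) } := by
  have hconE : ∀ x y : V, memVerts G.edgeFinset x → memVerts G.edgeFinset y →
      (SimpleGraph.fromEdgeSet (↑G.edgeFinset : Set (Sym2 V))).Reachable x y := by
    intro x y _ _
    rw [SimpleGraph.coe_edgeFinset, SimpleGraph.fromEdgeSet_edgeSet]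
    exact hG.preconnected x y
  apply le_antisymm
  · apply le_sInf
    rintro c ⟨μ, F, q, hF, hq, hsupp, hinv, rfl⟩
    refine (sInf_le (Set.mem_image_of_mem (Lam G v₁ δ S0)
      (show μ ∈ CC G S0 from ⟨F, hF, hsupp⟩))).trans ?_
    apply sInf_le
    obtain ⟨hFE, ⟨e0, he0, hv⟩, hFc⟩ := hS0sub hF
    have hspec := growSeq_spec F G.edgeFinset e0 he0 hFE hFc hconE
    have hFpos : 0 < F.card := Finset.card_pos.mpr ⟨e0, he0⟩
    have hFle : F.card ≤ G.edgeFinset.card := Finset.card_le_card hFE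
    let k0 : Fin G.edgeFinset.card := ⟨F.card - 1, by omega⟩
    have hk0 : growSeq F G.edgeFinset e0 (k0 : ℕ) = F := by
      obtain ⟨a, b, c, _⟩ := hspec k0 k0.2
      have hlt : (k0 : ℕ) < F.card := by simp only [k0]; omega
      refine Finset.eq_of_subset_of_card_le (c hlt) ?_
      rw [a]; simp only [k0]; omega
    have hmem0 : ∀ n, n < G.edgeFinset.card → e0 ∈ growSeq F G.edgeFinset e0 n := by
      intro n
      induction n with
      | zero => intro _; simp [growSeq]
      | succ n ih =>
        intro hn
        exact ((hspec n (by omega)).2.2.2 hn).1.1 (ih (by omega))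
    refine ⟨fun k => if k = k0 then μ else halfM G ⟨e0, hFE he0⟩,
      fun k => if k = k0 then 1 else 0,
      fun k => growSeq F G.edgeFinset e0 k,
      fun k => if k = k0 then q else revQ G, ?_, ?_, ?_, ?_, ?_, ?_, ?_, ?_, ?_⟩
    · refine ⟨fun k => (hspec k k.2).2.1, fun k => (hspec k k.2).1, ?_, ?_, ?_⟩
      · intro k l hkl
        have := ((hspec k k.2).2.2.2 (by have := l.2; omega)).1
        rwa [hkl] at this
      · intro k _
        exact ⟨e0, hmem0 k k.2, hv⟩
      · intro k l hkl
        have := ((hspec k k.2).2.2.2 (by have := l.2; omega)).2.2.2.2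
        rw [hkl] at this
        intro e he
        exact this e (by convert he)
    · intro k; dsimp only; split_ifs <;> norm_num
    · intro k hk
      dsimp only at hk ⊢
      rw [if_neg]
      rintro rfl
      exact hk (by rw [hk0]; exact hF)
    · simp
    · intro k z hz
      by_cases hk : k = k0
      · subst hk
        simp only [if_true] at hz
        dsimp only
        rw [hk0]; exact hsupp z hz
      · simp only [if_neg hk] at hz
        have hze : z.1 = ⟨e0, hFE he0⟩ := by
          by_contra hne
          exact hz (by simp [halfM, hne])
        rw [hze]
        exact hmem0 k k.2
    · intro z
      rw [Finset.sum_eq_single k0]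
      · simp
      · intro k _ hk; simp [hk]
      · simp
    · intro k
      by_cases hk : k = k0
      · simpa [hk] using hq
      · simpa [hk] using revQ_mem G
    · intro k
      by_cases hk : k = k0
      · simpa [hk] using hinv
      · simpa [hk] using halfM_inv G _
    · rw [Finset.sum_eq_single k0]
      · simp [hk0]
      · intro k _ hk; simp [hk]
      · simp
  · apply le_sInf
    rintro _ ⟨μ, _, rfl⟩
    apply le_sInf
    rintro c ⟨μs, r, Es, qs, _, hr, hr0, hsum, hsupp, _, hqs, hinv, rfl⟩
    generalize hm : sInf { c : EReal |
        ∃ (μ : ProbMeas (VSet G)) (F : Finset (Sym2 V)) (q : VSet G → VSet G → ℝ),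
          F ∈ S0 ∧ q ∈ TS G ∧ (∀ z : VSet G, μ.1 z ≠ 0 → z.1.1 ∈ F) ∧
          Invariant μ.1 q ∧ c = relEntInt μ.1 q (pS G δ F) } = m
    have h1 : m = ∑ k, ((r k : ℝ) : EReal) * m := by
      rw [ereal_sum_mul _ r hr, hsum]; simp
    rw [h1]
    apply Finset.sum_le_sum
    intro k _
    by_cases hk : Es k ∈ S0
    · refine mul_le_mul_of_nonneg_left ?_ (by exact_mod_cast hr k)
      rw [← hm]
      exact sInf_le ⟨μs k, Es k, qs k, hk, hqs k, hsupp k, hinv k, rfl⟩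
    · rw [hr0 k hk]; simp

end ORRW
end
end
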